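/- arXiv:gr-qc/0502116 — 2 statements merged into one kernel-verified Lean document; each statement's English description precedes it below -/
import Mathlib

section
/- Let (η, α, U, A, φ, σ) be a solution of the Gowdy symmetric IIA system on (T₋,T₊) with 0 < T₋ < t_i < T₊ < ∞. For any real numbers a and b, and any n ≤ 1/2, set k := (4a² + b²)/8. Then ∂ₜ(t^k α^n e^{2η+aφ−bU}) ≥ 0 at every point of (T₋,T₊) × S¹; consequently, for every t ∈ (T₋,t_i] and θ ∈ S¹, α(t,θ)^n e^{2η(t,θ)+aφ(t,θ)−bU(t,θ)} ≤ (t_i/T₋)^k α(t_i,θ)^n e^{2η(t_i,θ)+aφ(t_i,θ)−bU(t_i,θ)}, so α^n e^{2η+aφ−bU} is bounded on (T₋,t_i] × S¹. -/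
/-!
At fixed `θ` the logarithmic time derivative of `t ^ k * α ^ n * exp (2η + aφ - bU)` is
`k / t + n α̇ / α + 2 η̇ + a φ̇ - b U̇`. The time constraint gives the lower bound
`2 η̇ ≥ t (2 U̇² + φ̇² / 2 + α Q² e / 2)`, where `e = exp (2 lam φ + 2 (η - U))`, and the equation
for `α` gives `n α̇ / α = - n t α Q² e`. With `k = a² / 2 + b² / 8` the logarithmic derivative is
therefore at least
`(1 / 2 - n) t α Q² e + (t φ̇ + a)² / (2 t) + 2 (t U̇ - b / 4)² / t ≥ 0`.
This is `log_deriv_nonneg`. The pointwise bound follows by integrating from `t` to `t_i` and using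
`t > Tm` together with `k ≥ 0`.
-/

noncomputable section

open Real Set MeasureTheory Filter

/-- Partial derivative in the first (time) variable. -/
def pt (f : ℝ → ℝ → ℝ) : ℝ → ℝ → ℝ := fun t θ => deriv (fun s => f s θ) t

/-- Partial derivative in the second (angle) variable. -/
def pth (f : ℝ → ℝ → ℝ) : ℝ → ℝ → ℝ := fun t θ => deriv (fun x => f t x) θ

/-- The full Gowdy symmetric IIA system (both constraints, the equation for `α`,
and the four evolution equations) holding at all times in `S` (dot = `pt`,
prime = `pth`). -/
structure IsGowdyIIA (Q lam : ℝ) (S : Set ℝ) (η α U A φ σ : ℝ → ℝ → ℝ) : Prop where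
  alpha_pos : ∀ t ∈ S, ∀ θ : ℝ, 0 < α t θ
  constraint_t : ∀ t ∈ S, ∀ θ : ℝ,
    pt η t θ / t =
      (pt U t θ) ^ 2 + α t θ * (pth U t θ) ^ 2
      + exp (4 * U t θ) / (4 * t ^ 2) * ((pt A t θ) ^ 2 + α t θ * (pth A t θ) ^ 2)
      + (1 / 4) * ((pt φ t θ) ^ 2 + α t θ * (pth φ t θ) ^ 2
          + exp (2 * lam * φ t θ) * ((pt σ t θ) ^ 2 + α t θ * (pth σ t θ) ^ 2)
          + α t θ * Q ^ 2 * exp (2 * lam * φ t θ + 2 * (η t θ - U t θ)))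
  constraint_θ : ∀ t ∈ S, ∀ θ : ℝ,
    pth η t θ / t =
      2 * pt U t θ * pth U t θ
      + exp (4 * U t θ) / (2 * t ^ 2) * (pt A t θ * pth A t θ)
      - pth α t θ / (2 * t * α t θ)
      + (1 / 2) * (pt φ t θ * pth φ t θ
          + exp (2 * lam * φ t θ) * (pt σ t θ * pth σ t θ))
  constraint_α : ∀ t ∈ S, ∀ θ : ℝ,
    pt α t θ = - t * (α t θ) ^ 2 * Q ^ 2 * exp (2 * lam * φ t θ + 2 * (η t θ - U t θ))
  evol_U : ∀ t ∈ S, ∀ θ : ℝ,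
    pt (pt U) t θ - α t θ * pth (pth U) t θ =
      - pt U t θ / t + pt α t θ * pt U t θ / (2 * α t θ) + pth α t θ * pth U t θ / 2
      + exp (4 * U t θ) / (2 * t ^ 2) * ((pt A t θ) ^ 2 - α t θ * (pth A t θ) ^ 2)
      + (1 / 4) * α t θ * Q ^ 2 * exp (2 * lam * φ t θ + 2 * (η t θ - U t θ))
  evol_A : ∀ t ∈ S, ∀ θ : ℝ,
    pt (pt A) t θ - α t θ * pth (pth A) t θ =
      pt A t θ / t + pt α t θ * pt A t θ / (2 * α t θ) + pth α t θ * pth A t θ / 2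
      - 4 * (pt A t θ * pt U t θ - α t θ * pth A t θ * pth U t θ)
  evol_φ : ∀ t ∈ S, ∀ θ : ℝ,
    pt (pt φ) t θ - α t θ * pth (pth φ) t θ =
      - pt φ t θ / t + pt α t θ * pt φ t θ / (2 * α t θ) + pth α t θ * pth φ t θ / 2
      + lam * exp (2 * lam * φ t θ) * ((pt σ t θ) ^ 2 - α t θ * (pth σ t θ) ^ 2)
      - lam * α t θ * Q ^ 2 * exp (2 * lam * φ t θ + 2 * (η t θ - U t θ))
  evol_σ : ∀ t ∈ S, ∀ θ : ℝ,
    pt (pt σ) t θ - α t θ * pth (pth σ) t θ =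
      - pt σ t θ / t + pt α t θ * pt σ t θ / (2 * α t θ) + pth α t θ * pth σ t θ / 2
      - 2 * lam * (pt φ t θ * pt σ t θ - α t θ * pth φ t θ * pth σ t θ)

/-- A smooth, spatially `2π`-periodic solution of the Gowdy symmetric IIA system
on the areal time interval `(Tm, Tp)`. -/
structure GowdySolution (Q lam Tm Tp : ℝ) where
  η : ℝ → ℝ → ℝ
  α : ℝ → ℝ → ℝ
  U : ℝ → ℝ → ℝ
  A : ℝ → ℝ → ℝ
  φ : ℝ → ℝ → ℝ
  σ : ℝ → ℝ → ℝ
  smooth : ∀ f ∈ ([η, α, U, A, φ, σ] : List (ℝ → ℝ → ℝ)),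
    ContDiffOn ℝ (⊤ : ℕ∞) (fun p : ℝ × ℝ => f p.1 p.2) (Ioo Tm Tp ×ˢ (univ : Set ℝ))
  periodic : ∀ f ∈ ([η, α, U, A, φ, σ] : List (ℝ → ℝ → ℝ)), ∀ t θ : ℝ,
    f t (θ + 2 * π) = f t θ
  sys : IsGowdyIIA Q lam (Ioo Tm Tp) η α U A φ σ

/-- The energy density `𝓔`. -/
def calE (lam : ℝ) (α U A φ σ : ℝ → ℝ → ℝ) (t θ : ℝ) : ℝ :=
  (pt U t θ) ^ 2 + α t θ * (pth U t θ) ^ 2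
  + exp (4 * U t θ) / (4 * t ^ 2) * ((pt A t θ) ^ 2 + α t θ * (pth A t θ) ^ 2)
  + (1 / 4) * ((pt φ t θ) ^ 2 + α t θ * (pth φ t θ) ^ 2
      + exp (2 * lam * φ t θ) * ((pt σ t θ) ^ 2 + α t θ * (pth σ t θ) ^ 2))

/-- The energy `E(t)` (integral over the circle `S¹ = [0, 2π]`). -/
def energyE (Q lam : ℝ) (η α U A φ σ : ℝ → ℝ → ℝ) (t : ℝ) : ℝ :=
  ∫ θ in Ioc (0 : ℝ) (2 * π),
    (1 / Real.sqrt (α t θ)) *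
      (calE lam α U A φ σ t θ
        + (1 / 4) * α t θ * Q ^ 2 * exp (2 * (η t θ + lam * φ t θ - U t θ)))

/-- The energy `Ẽ(t)`. -/
def energyEt (lam : ℝ) (α U A φ σ : ℝ → ℝ → ℝ) (t : ℝ) : ℝ :=
  ∫ θ in Ioc (0 : ℝ) (2 * π), calE lam α U A φ σ t θ / Real.sqrt (α t θ)

/-- The timelike convergence condition (TCC) for the Gowdy symmetric IIA system. -/
def TCC (Q lam Tm Tp : ℝ) (η α U φ σ : ℝ → ℝ → ℝ) : Prop :=
  ∀ t ∈ Ioo Tm Tp, ∀ θ : ℝ,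
    (pt φ t θ) ^ 2 + exp (2 * lam * φ t θ) * (pt σ t θ) ^ 2
      ≥ (1 / 2) * α t θ * Q ^ 2 * exp (2 * (η t θ + lam * φ t θ - U t θ))

lemma GowdySolution.hasDerivAt_time {Q lam Tm Tp : ℝ} (G : GowdySolution Q lam Tm Tp)
    {f : ℝ → ℝ → ℝ} (hf : f ∈ ([G.η, G.α, G.U, G.A, G.φ, G.σ] : List (ℝ → ℝ → ℝ)))
    {t : ℝ} (ht : t ∈ Ioo Tm Tp) (θ : ℝ) : HasDerivAt (fun s => f s θ) (pt f t θ) t := by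
  have hmem : Ioo Tm Tp ×ˢ (univ : Set ℝ) ∈ nhds (t, θ) :=
    (isOpen_Ioo.prod isOpen_univ).mem_nhds ⟨ht, mem_univ θ⟩
  have h : DifferentiableAt ℝ (fun p : ℝ × ℝ => f p.1 p.2) (t, θ) :=
    ((G.smooth f hf).contDiffAt hmem).differentiableAt (by simp)
  have hc : DifferentiableAt ℝ (fun s : ℝ => (s, θ)) t := by fun_prop
  exact (DifferentiableAt.comp (f := fun s : ℝ => (s, θ)) t h hc).hasDerivAt

/-- The logarithmic time derivative of the weighted quantity is nonnegative: the two squares are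
completed by the choice `k = (4 a² + b²) / 8`, and `n ≤ 1 / 2` makes the `Q²` terms combine to
something nonnegative. -/
lemma log_deriv_nonneg {Q lam Tm Tp : ℝ} (hTm : 0 < Tm) (G : GowdySolution Q lam Tm Tp)
    (a b n : ℝ) (hn : n ≤ 1 / 2) {t : ℝ} (ht : t ∈ Ioo Tm Tp) (θ : ℝ) :
    0 ≤ (4 * a ^ 2 + b ^ 2) / 8 / t + n * (pt G.α t θ / G.α t θ)
      + (2 * pt G.η t θ + a * pt G.φ t θ - b * pt G.U t θ) := by
  have ht0 : 0 < t := hTm.trans ht.1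
  have hα : 0 < G.α t θ := G.sys.alpha_pos t ht θ
  have h1 := G.sys.constraint_t t ht θ
  have h2 := G.sys.constraint_α t ht θ
  set e := exp (2 * lam * G.φ t θ + 2 * (G.η t θ - G.U t θ)) with he
  have he0 : 0 < e := exp_pos _
  set u := pt G.U t θ
  set p := pt G.φ t θ
  -- The constraint without the nonnegative terms that do not enter the estimate.
  have hη : u ^ 2 + (1 / 4) * (p ^ 2 + G.α t θ * Q ^ 2 * e) ≤ pt G.η t θ / t := by
    rw [h1]
    have x1 : 0 ≤ G.α t θ * (pth G.U t θ) ^ 2 := by positivity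
    have x2 : 0 ≤ exp (4 * G.U t θ) / (4 * t ^ 2) *
        ((pt G.A t θ) ^ 2 + G.α t θ * (pth G.A t θ) ^ 2) := by positivity
    have x3 : 0 ≤ G.α t θ * (pth G.φ t θ) ^ 2 := by positivity
    have x4 : 0 ≤ exp (2 * lam * G.φ t θ) *
        ((pt G.σ t θ) ^ 2 + G.α t θ * (pth G.σ t θ) ^ 2) := by positivity
    linarith
  rw [le_div_iff₀ ht0] at hη
  have hα' : pt G.α t θ / G.α t θ = - (t * G.α t θ * Q ^ 2 * e) := by
    rw [h2]; field_simp
  rw [hα']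
  have hq : 0 ≤ (1 / 2 - n) * (t * G.α t θ * Q ^ 2 * e) :=
    mul_nonneg (by linarith) (by positivity)
  have hsq : 0 ≤ (t * p + a) ^ 2 / (2 * t) + 2 * (t * u - b / 4) ^ 2 / t := by positivity
  have hexp : (t * p + a) ^ 2 / (2 * t) + 2 * (t * u - b / 4) ^ 2 / t
      = (4 * a ^ 2 + b ^ 2) / 8 / t + (t * p ^ 2 / 2 + a * p) + (2 * t * u ^ 2 - b * u) := by
    field_simp; ring
  nlinarith

lemma hasDerivAt_weighted {Q lam Tm Tp : ℝ} (hTm : 0 < Tm) (G : GowdySolution Q lam Tm Tp)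
    (a b n k : ℝ) {t : ℝ} (ht : t ∈ Ioo Tm Tp) (θ : ℝ) :
    HasDerivAt (fun s => s ^ k * G.α s θ ^ n *
        exp (2 * G.η s θ + a * G.φ s θ - b * G.U s θ))
      (t ^ k * G.α t θ ^ n * exp (2 * G.η t θ + a * G.φ t θ - b * G.U t θ) *
        (k / t + n * (pt G.α t θ / G.α t θ)
          + (2 * pt G.η t θ + a * pt G.φ t θ - b * pt G.U t θ))) t := by
  have ht0 : 0 < t := hTm.trans ht.1
  have hα : 0 < G.α t θ := G.sys.alpha_pos t ht θ
  have dη := G.hasDerivAt_time (f := G.η) (by simp) ht θ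
  have dα := G.hasDerivAt_time (f := G.α) (by simp) ht θ
  have dU := G.hasDerivAt_time (f := G.U) (by simp) ht θ
  have dφ := G.hasDerivAt_time (f := G.φ) (by simp) ht θ
  have d1 := Real.hasDerivAt_rpow_const (x := t) (p := k) (Or.inl ht0.ne')
  have d2 := dα.rpow_const (p := n) (Or.inl hα.ne')
  have d3 := (((dη.const_mul 2).add (dφ.const_mul a)).sub (dU.const_mul b)).exp
  refine ((d1.mul d2).mul d3).congr_deriv ?_
  rw [Real.rpow_sub_one ht0.ne', Real.rpow_sub_one hα.ne']
  simp only [Pi.add_apply, Pi.sub_apply, Pi.mul_apply]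
  field_simp

theorem monotone_weighted_quantity (Q lam Tm Tp t_i : ℝ) (hQ : Q ≠ 0) (hTm : 0 < Tm) (hti : Tm < t_i)
    (hTp : t_i < Tp) (G : GowdySolution Q lam Tm Tp)
    (a b n : ℝ) (hn : n ≤ 1 / 2) :
    (∀ t ∈ Ioo Tm Tp, ∀ θ : ℝ,
      0 ≤ pt (fun s x => s ^ ((4 * a ^ 2 + b ^ 2) / 8) * G.α s x ^ n *
        exp (2 * G.η s x + a * G.φ s x - b * G.U s x)) t θ)
    ∧ ∀ t ∈ Ioc Tm t_i, ∀ θ : ℝ,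
        G.α t θ ^ n * exp (2 * G.η t θ + a * G.φ t θ - b * G.U t θ)
          ≤ (t_i / Tm) ^ ((4 * a ^ 2 + b ^ 2) / 8) * G.α t_i θ ^ n *
              exp (2 * G.η t_i θ + a * G.φ t_i θ - b * G.U t_i θ) := by
  have hF : ∀ t ∈ Ioo Tm Tp, ∀ θ : ℝ,
      0 ≤ pt (fun s x => s ^ ((4 * a ^ 2 + b ^ 2) / 8) * G.α s x ^ n *
        exp (2 * G.η s x + a * G.φ s x - b * G.U s x)) t θ := by
    intro t ht θ
    have ht0 : 0 < t := hTm.trans ht.1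
    have hα : 0 < G.α t θ := G.sys.alpha_pos t ht θ
    have h := (hasDerivAt_weighted hTm G a b n ((4 * a ^ 2 + b ^ 2) / 8) ht θ).deriv
    rw [pt, h]
    exact mul_nonneg (by positivity) (log_deriv_nonneg hTm G a b n hn ht θ)
  refine ⟨hF, fun t ht θ => ?_⟩
  have hmono : MonotoneOn (fun s => s ^ ((4 * a ^ 2 + b ^ 2) / 8) * G.α s θ ^ n *
      exp (2 * G.η s θ + a * G.φ s θ - b * G.U s θ)) (Ioo Tm Tp) := by
    refine monotoneOn_of_deriv_nonneg (convex_Ioo Tm Tp) ?_ ?_ ?_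
    · exact fun s hs =>
        (hasDerivAt_weighted hTm G a b n _ hs θ).continuousAt.continuousWithinAt
    · rw [interior_Ioo]
      exact fun s hs =>
        (hasDerivAt_weighted hTm G a b n _ hs θ).differentiableAt.differentiableWithinAt
    · rw [interior_Ioo]
      exact fun s hs => hF s hs θ
  have hti' : t_i ∈ Ioo Tm Tp := ⟨hti, hTp⟩
  have hm := hmono ⟨ht.1, ht.2.trans_lt hTp⟩ hti' ht.2
  have ht_i0 : 0 < t_i := hTm.trans hti
  have hα : 0 < G.α t θ := G.sys.alpha_pos t ⟨ht.1, ht.2.trans_lt hTp⟩ θ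
  have hk : 0 ≤ (4 * a ^ 2 + b ^ 2) / 8 := by positivity
  have hpow : Tm ^ ((4 * a ^ 2 + b ^ 2) / 8) ≤ t ^ ((4 * a ^ 2 + b ^ 2) / 8) :=
    Real.rpow_le_rpow hTm.le ht.1.le hk
  rw [Real.div_rpow ht_i0.le hTm.le, mul_assoc, div_mul_eq_mul_div, le_div_iff₀ (by positivity)]
  simp only [mul_assoc] at hm ⊢
  rw [← mul_assoc, mul_comm]
  exact (mul_le_mul_of_nonneg_right hpow (by positivity)).trans hm

end
end

section
/- Let (η, α, U, A, φ, σ) be a solution of the Gowdy symmetric IIA system on (T₋,T₊) with 0 < T₋ < t_i < T₊ < ∞. Assume there is a constant λ̄ with |λ| ≤ λ̄ < 1/2 and that the timelike convergence condition φ̇² + e^{2λφ}σ̇² ≥ (1/2)αQ²e^{2(η+λφ−U)} holds at every point. Then ln α, and hence α, is bounded on (T₋,t_i] × S¹. -/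
/-!
Write `a = α^{-1/2}`, `c = α^{1/2}` and `W = log (α Q² e^{2λφ + 2(η - U)})`. Since
`∂ₜ log α = -t e^W`, it suffices to bound `W` from above on `(Tm, t_i]`
(`Reduced.W_bounded`).

The energy `E = ∫ a (𝓔 + e^W / 4)` over the circle satisfies `E' = -(2/t) ∫ disD` with
`0 ≤ disD ≤ enD` (`Reduced.pt_en`), so towards the past it stays between `E(t_i)` and
`(t_i / Tm)² E(t_i)` (`Reduced.energy_bounds`). The `θ`-constraint gives `|∂_θ W| ≤ const (enD + a)`,
and `L = ∫ a` is nondecreasing in time, so the oscillation of `W` over the circle is bounded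
uniformly on `(Tm, t_i]` (`Reduced.osc_W`).

It remains to bound the weighted mean `m = ∫ a W / L`. Let `l = log L`, so that
`l' = (t/2) ∫ a e^W / L`. The `t`-constraint bounds `∂ₜ W` from below by the energy density, and the
covariance of `W` and `e^W` with respect to the weight `a` is nonnegative; together these give
`m' + 2 l' ≥ (16/9) t E / L - C`. The timelike convergence condition gives `E ≥ (3/8) ∫ a e^W`, so the
right-hand side is at least `(4/3) l' - C`; the lower bound for `E` makes it at least `k e^{-l} - C`.
The oscillation bound gives `l' ≤ C₂ e^m`. These three differential inequalities bound `m`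
from above (`ode_bound`).
-/

noncomputable section

open Real Set MeasureTheory Filter

/-! ### Smooth functions on the slab -/

/-- Smoothness of `f` on the slab `(Tm, Tp) × ℝ`. -/
def SmoothSlab (Tm Tp : ℝ) (f : ℝ → ℝ → ℝ) : Prop :=
  ContDiffOn ℝ (⊤ : ℕ∞) (fun p : ℝ × ℝ => f p.1 p.2) (Ioo Tm Tp ×ˢ (univ : Set ℝ))

lemma isOpen_slab (Tm Tp : ℝ) : IsOpen (Ioo Tm Tp ×ˢ (univ : Set ℝ)) :=
  isOpen_Ioo.prod isOpen_univ

namespace SmoothSlab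

variable {Tm Tp : ℝ} {f g : ℝ → ℝ → ℝ}

lemma contDiffAt (hf : SmoothSlab Tm Tp f) {t : ℝ} (ht : t ∈ Ioo Tm Tp) (θ : ℝ) :
    ContDiffAt ℝ (⊤ : ℕ∞) (fun p : ℝ × ℝ => f p.1 p.2) (t, θ) :=
  ContDiffOn.contDiffAt hf ((isOpen_slab Tm Tp).mem_nhds ⟨ht, mem_univ _⟩)

lemma hasFDerivAt (hf : SmoothSlab Tm Tp f) {t : ℝ} (ht : t ∈ Ioo Tm Tp) (θ : ℝ) :
    HasFDerivAt (fun p : ℝ × ℝ => f p.1 p.2)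
      (fderiv ℝ (fun p : ℝ × ℝ => f p.1 p.2) (t, θ)) (t, θ) :=
  ((hf.contDiffAt ht θ).differentiableAt (by simp)).hasFDerivAt

lemma pt_eq (hf : SmoothSlab Tm Tp f) {t : ℝ} (ht : t ∈ Ioo Tm Tp) (θ : ℝ) :
    HasDerivAt (fun s => f s θ) (fderiv ℝ (fun p : ℝ × ℝ => f p.1 p.2) (t, θ) (1, 0)) t :=
  HasFDerivAt.comp_hasDerivAt (l := fun p : ℝ × ℝ => f p.1 p.2) (f := fun s => (s, θ)) t
    (hf.hasFDerivAt ht θ) ((hasDerivAt_id t).prodMk (hasDerivAt_const t θ))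

lemma pth_eq (hf : SmoothSlab Tm Tp f) {t : ℝ} (ht : t ∈ Ioo Tm Tp) (θ : ℝ) :
    HasDerivAt (fun x => f t x) (fderiv ℝ (fun p : ℝ × ℝ => f p.1 p.2) (t, θ) (0, 1)) θ :=
  HasFDerivAt.comp_hasDerivAt (l := fun p : ℝ × ℝ => f p.1 p.2) (f := fun x => (t, x)) θ
    (hf.hasFDerivAt ht θ) ((hasDerivAt_const θ t).prodMk (hasDerivAt_id θ))

lemma hasDerivAt_t (hf : SmoothSlab Tm Tp f) {t : ℝ} (ht : t ∈ Ioo Tm Tp) (θ : ℝ) :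
    HasDerivAt (fun s => f s θ) (pt f t θ) t :=
  (hf.pt_eq ht θ).differentiableAt.hasDerivAt

lemma hasDerivAt_θ (hf : SmoothSlab Tm Tp f) {t : ℝ} (ht : t ∈ Ioo Tm Tp) (θ : ℝ) :
    HasDerivAt (fun x => f t x) (pth f t θ) θ :=
  (hf.pth_eq ht θ).differentiableAt.hasDerivAt

lemma fderiv_smooth (hf : SmoothSlab Tm Tp f) :
    ContDiffOn ℝ (⊤ : ℕ∞) (fderiv ℝ (fun p : ℝ × ℝ => f p.1 p.2))
      (Ioo Tm Tp ×ˢ (univ : Set ℝ)) :=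
  ContDiffOn.fderiv_of_isOpen hf (isOpen_slab Tm Tp) (by simp)

lemma pt (hf : SmoothSlab Tm Tp f) : SmoothSlab Tm Tp (pt f) :=
  (hf.fderiv_smooth.clm_apply (contDiffOn_const (c := ((1, 0) : ℝ × ℝ)))).congr
    fun p hp => (hf.pt_eq hp.1 p.2).deriv

lemma pth (hf : SmoothSlab Tm Tp f) : SmoothSlab Tm Tp (pth f) :=
  (hf.fderiv_smooth.clm_apply (contDiffOn_const (c := ((0, 1) : ℝ × ℝ)))).congr
    fun p hp => (hf.pth_eq hp.1 p.2).deriv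

/-- Mixed partial derivatives commute. -/
lemma pth_pt (hf : SmoothSlab Tm Tp f) {t : ℝ} (ht : t ∈ Ioo Tm Tp) (θ : ℝ) :
    _root_.pth (_root_.pt f) t θ = _root_.pt (_root_.pth f) t θ := by
  have hsymm : IsSymmSndFDerivAt ℝ (fun p : ℝ × ℝ => f p.1 p.2) (t, θ) :=
    (hf.contDiffAt ht θ).isSymmSndFDerivAt (by
      rw [minSmoothness_of_isRCLikeNormedField]
      exact WithTop.coe_le_coe.2 le_top)
  have hD : HasFDerivAt (fderiv ℝ (fun p : ℝ × ℝ => f p.1 p.2))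
      (fderiv ℝ (fderiv ℝ (fun p : ℝ × ℝ => f p.1 p.2)) (t, θ)) (t, θ) :=
    ((hf.fderiv_smooth.contDiffAt ((isOpen_slab Tm Tp).mem_nhds
      ⟨ht, mem_univ _⟩)).differentiableAt (by simp)).hasFDerivAt
  have h1 : HasDerivAt (fun x => fderiv ℝ (fun p : ℝ × ℝ => f p.1 p.2) (t, x) (1, 0))
      (fderiv ℝ (fderiv ℝ (fun p : ℝ × ℝ => f p.1 p.2)) (t, θ) (0, 1) (1, 0)) θ := by
    have := hD.comp_hasDerivAt θ ((hasDerivAt_const θ t).prodMk (hasDerivAt_id θ))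
    simpa using this.clm_apply (hasDerivAt_const θ ((1, 0) : ℝ × ℝ))
  have h2 : HasDerivAt (fun s => fderiv ℝ (fun p : ℝ × ℝ => f p.1 p.2) (s, θ) (0, 1))
      (fderiv ℝ (fderiv ℝ (fun p : ℝ × ℝ => f p.1 p.2)) (t, θ) (1, 0) (0, 1)) t := by
    have := hD.comp_hasDerivAt t ((hasDerivAt_id t).prodMk (hasDerivAt_const t θ))
    simpa using this.clm_apply (hasDerivAt_const t ((0, 1) : ℝ × ℝ))
  have h1' : _root_.pth (_root_.pt f) t θ = _ := (h1.congr_of_eventuallyEq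
    (Eventually.of_forall fun x => (hf.pt_eq ht x).deriv)).deriv
  have h2' : _root_.pt (_root_.pth f) t θ = _ := (h2.congr_of_eventuallyEq (by
    filter_upwards [isOpen_Ioo.mem_nhds ht] with s hs using (hf.pth_eq hs θ).deriv)).deriv
  rw [h1', h2']
  exact hsymm.eq _ _

lemma continuous_θ (hf : SmoothSlab Tm Tp f) {t : ℝ} (ht : t ∈ Ioo Tm Tp) :
    Continuous (fun θ => f t θ) :=
  continuous_iff_continuousAt.2 fun θ => (hf.hasDerivAt_θ ht θ).continuousAt

lemma intble (hf : SmoothSlab Tm Tp f) {t : ℝ} (ht : t ∈ Ioo Tm Tp) (x y : ℝ) :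
    IntervalIntegrable (fun θ => f t θ) volume x y :=
  (hf.continuous_θ ht).intervalIntegrable _ _

lemma integral_pos_of_pos (hf : SmoothSlab Tm Tp f) {t : ℝ} (ht : t ∈ Ioo Tm Tp)
    (h : ∀ θ, 0 < f t θ) : 0 < ∫ θ in (0 : ℝ)..(2 * π), f t θ :=
  intervalIntegral.intervalIntegral_pos_of_pos (hf.intble ht _ _) h (by positivity)

/-- Differentiation under the integral sign over the circle `[0, 2π]`. -/
lemma hasDerivAt_integral (hf : SmoothSlab Tm Tp f) {t : ℝ} (ht : t ∈ Ioo Tm Tp) :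
    HasDerivAt (fun s => ∫ θ in (0 : ℝ)..(2 * π), f s θ)
      (∫ θ in (0 : ℝ)..(2 * π), _root_.pt f t θ) t := by
  obtain ⟨ε, hε, hball⟩ := Metric.nhds_basis_closedBall.mem_iff.1 (isOpen_Ioo.mem_nhds ht)
  have hcpt : IsCompact (Metric.closedBall t ε ×ˢ Icc (0 : ℝ) (2 * π)) :=
    (isCompact_closedBall t ε).prod isCompact_Icc
  obtain ⟨C, hC⟩ := hcpt.exists_bound_of_continuousOn
    (f := fun p : ℝ × ℝ => _root_.pt f p.1 p.2)
    ((ContDiffOn.continuousOn hf.pt).mono (prod_mono hball (subset_univ _)))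
  refine (intervalIntegral.hasDerivAt_integral_of_dominated_loc_of_deriv_le
    (F := f) (F' := _root_.pt f) (bound := fun _ => C)
    (Metric.closedBall_mem_nhds t hε) ?_ ?_ ?_ ?_ ?_ ?_).2
  · filter_upwards [isOpen_Ioo.mem_nhds ht] with s hs
    exact (hf.continuous_θ hs).aestronglyMeasurable
  · exact (hf.continuous_θ ht).intervalIntegrable _ _
  · exact (hf.pt.continuous_θ ht).aestronglyMeasurable
  · refine Eventually.of_forall fun θ hθ s hs => hC (s, θ) ⟨hs, ?_⟩
    rw [uIoc_of_le (by positivity)] at hθ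
    exact ⟨hθ.1.le, hθ.2⟩
  · exact intervalIntegrable_const
  · exact Eventually.of_forall fun θ _ s hs => hf.hasDerivAt_t (hball hs) θ

lemma const (c : ℝ) : SmoothSlab Tm Tp (fun _ _ => c) := contDiffOn_const

lemma time : SmoothSlab Tm Tp (fun t _ => t) := contDiffOn_fst

lemma add (hf : SmoothSlab Tm Tp f) (hg : SmoothSlab Tm Tp g) :
    SmoothSlab Tm Tp (fun t θ => f t θ + g t θ) := ContDiffOn.add hf hg

lemma sub (hf : SmoothSlab Tm Tp f) (hg : SmoothSlab Tm Tp g) :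
    SmoothSlab Tm Tp (fun t θ => f t θ - g t θ) := ContDiffOn.sub hf hg

lemma mul (hf : SmoothSlab Tm Tp f) (hg : SmoothSlab Tm Tp g) :
    SmoothSlab Tm Tp (fun t θ => f t θ * g t θ) := ContDiffOn.mul hf hg

lemma pow (hf : SmoothSlab Tm Tp f) (n : ℕ) :
    SmoothSlab Tm Tp (fun t θ => f t θ ^ n) := ContDiffOn.pow hf n

lemma exp (hf : SmoothSlab Tm Tp f) :
    SmoothSlab Tm Tp (fun t θ => Real.exp (f t θ)) := ContDiffOn.exp hf

lemma log (hf : SmoothSlab Tm Tp f) (h0 : ∀ t ∈ Ioo Tm Tp, ∀ θ, f t θ ≠ 0) :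
    SmoothSlab Tm Tp (fun t θ => Real.log (f t θ)) :=
  ContDiffOn.log hf fun p hp => h0 p.1 hp.1 p.2

lemma div (hf : SmoothSlab Tm Tp f) (hg : SmoothSlab Tm Tp g)
    (h0 : ∀ t ∈ Ioo Tm Tp, ∀ θ, g t θ ≠ 0) :
    SmoothSlab Tm Tp (fun t θ => f t θ / g t θ) :=
  ContDiffOn.div hf hg fun p hp => h0 p.1 hp.1 p.2

end SmoothSlab

/-! ### Periodicity and differential inequalities -/

lemma pt_periodic {f : ℝ → ℝ → ℝ} (hf : ∀ t θ, f t (θ + 2 * π) = f t θ) (t θ : ℝ) :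
    pt f t (θ + 2 * π) = pt f t θ := by
  simp only [pt, hf]

lemma pth_periodic {f : ℝ → ℝ → ℝ} (hf : ∀ t θ, f t (θ + 2 * π) = f t θ) (t θ : ℝ) :
    pth f t (θ + 2 * π) = pth f t θ := by
  have := deriv_comp_add_const (fun x => f t x) (2 * π) θ
  simp only [hf] at this
  exact this.symm

lemma mono_of_deriv {Tm ti : ℝ} {F F' : ℝ → ℝ}
    (hF : ∀ t ∈ Ioc Tm ti, HasDerivAt F (F' t) t) (h0 : ∀ t ∈ Ioc Tm ti, 0 ≤ F' t)
    {t : ℝ} (ht : t ∈ Ioc Tm ti) : F t ≤ F ti := by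
  have hsub : Icc t ti ⊆ Ioc Tm ti := fun s hs => ⟨ht.1.trans_le hs.1, hs.2⟩
  refine monotoneOn_of_deriv_nonneg (convex_Icc t ti)
    (fun s hs => (hF s (hsub hs)).continuousAt.continuousWithinAt) ?_ ?_
    (left_mem_Icc.2 ht.2) (right_mem_Icc.2 ht.2) ht.2
  · intro s hs
    exact (hF s (hsub (interior_subset hs))).differentiableAt.differentiableWithinAt
  · intro s hs
    rw [(hF s (hsub (interior_subset hs))).deriv]
    exact h0 s (hsub (interior_subset hs))

/-- The closing differential inequality. Here `m` will be the weighted mean of `W` and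
`l = log ∫ a`. Integrating `h1` backwards from `ti` gives `m ≤ B - (2/3) l`, so `l` can only grow
at rate `D exp (-(2/3) l)` by `h3`. This makes the source `k exp (-l)` in `h2` dominate the
derivative of `-3q exp (-l/3)`, and the resulting bound
`m ≤ const - 2 l - 3q exp (-l/3)` is bounded above, also as `l → -∞`. -/
lemma ode_bound {Tm ti C C2 k : ℝ} (hk : 0 < k) (hC2 : 0 < C2)
    {m m' l l' : ℝ → ℝ}
    (hm : ∀ t ∈ Ioc Tm ti, HasDerivAt m (m' t) t)
    (hl : ∀ t ∈ Ioc Tm ti, HasDerivAt l (l' t) t)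
    (h1 : ∀ t ∈ Ioc Tm ti, 4 / 3 * l' t - C ≤ m' t + 2 * l' t)
    (h2 : ∀ t ∈ Ioc Tm ti, k * exp (-l t) - C ≤ m' t + 2 * l' t)
    (h3 : ∀ t ∈ Ioc Tm ti, l' t ≤ C2 * exp (m t)) (hC : 0 ≤ C) :
    ∃ M, ∀ t ∈ Ioc Tm ti, m t ≤ M := by
  -- the first inequality gives `exp m ≤ const * exp (-(2/3) l)`
  set B := m ti + 2 / 3 * l ti + C * (ti - Tm) with hB
  have step1 : ∀ t ∈ Ioc Tm ti, m t ≤ B - 2 / 3 * l t := by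
    intro t ht
    have := mono_of_deriv (F := fun t => m t + 2 / 3 * l t + C * t)
      (F' := fun t => m' t + 2 / 3 * l' t + C * 1)
      (fun s hs => ((hm s hs).add ((hl s hs).const_mul _)).add ((hasDerivAt_id s).const_mul C))
      (fun s hs => by have := h1 s hs; linarith) ht
    nlinarith [ht.1]
  set D := C2 * exp B with hD
  have hDpos : 0 < D := by positivity
  have hl' : ∀ t ∈ Ioc Tm ti, l' t ≤ D * exp (-(2 / 3) * l t) := by
    intro t ht
    refine (h3 t ht).trans ?_
    rw [hD, mul_assoc, ← exp_add]
    gcongr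
    have := step1 t ht
    linarith
  set q := k / D with hq
  have hqpos : 0 < q := by positivity
  have step2 : ∀ t ∈ Ioc Tm ti,
      m t ≤ (m ti + 2 * l ti + 3 * q * exp (-(1 / 3) * l ti) + C * (ti - Tm))
        - 2 * l t - 3 * q * exp (-(1 / 3) * l t) := by
    intro t ht
    have := mono_of_deriv (F := fun t => m t + 2 * l t + 3 * q * exp (-(1 / 3) * l t) + C * t)
      (F' := fun t => m' t + 2 * l' t
        + 3 * q * (exp (-(1 / 3) * l t) * (-(1 / 3) * l' t)) + C * 1)
      (fun s hs => (((hm s hs).add ((hl s hs).const_mul _)).add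
        ((((hl s hs).const_mul _).exp).const_mul _)).add ((hasDerivAt_id s).const_mul C))
      (fun s hs => by
        have a1 := h2 s hs
        have a2 := hl' s hs
        have a3 : exp (-l s) = exp (-(1 / 3) * l s) * exp (-(2 / 3) * l s) := by
          rw [← exp_add]; ring_nf
        have a4 : k = q * D := by rw [hq]; field_simp
        have a5 : q * exp (-(1 / 3) * l s) * l' s
            ≤ q * exp (-(1 / 3) * l s) * (D * exp (-(2 / 3) * l s)) := by gcongr
        rw [a3, a4] at a1
        linarith) ht
    nlinarith [ht.1]
  refine ⟨(m ti + 2 * l ti + 3 * q * exp (-(1 / 3) * l ti) + C * (ti - Tm))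
    + 6 * Real.log (2 / q), fun t ht => ?_⟩
  -- tangent line of `exp` at `log (2 / q)`
  have h4 := add_one_le_exp (-(1 / 3) * l t - Real.log (2 / q))
  rw [exp_sub, exp_log (by positivity), le_div_iff₀ (by positivity)] at h4
  have h5 := mul_le_mul_of_nonneg_left h4 hqpos.le
  have h6 : q * ((-(1 / 3) * l t - Real.log (2 / q) + 1) * (2 / q))
      = 2 * (-(1 / 3) * l t - Real.log (2 / q) + 1) := by field_simp
  have := step2 t ht
  linarith

/-! ### The reduced system -/

/-- The coefficient `e^{4U} / (4t²)` of the `A`-part of the energy density. -/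
def coefA (U : ℝ → ℝ → ℝ) (t θ : ℝ) : ℝ := exp (4 * U t θ) / (4 * t ^ 2)

/-- The coefficient `e^{2λφ} / 4` of the `σ`-part of the energy density. -/
def coefσ (lam : ℝ) (φ : ℝ → ℝ → ℝ) (t θ : ℝ) : ℝ := exp (2 * lam * φ t θ) / 4

/-- The kinetic (time derivative) part of `𝓔`. -/
def kinD (lam : ℝ) (U A φ σ : ℝ → ℝ → ℝ) (t θ : ℝ) : ℝ :=
  pt U t θ ^ 2 + coefA U t θ * pt A t θ ^ 2 + pt φ t θ ^ 2 / 4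
    + coefσ lam φ t θ * pt σ t θ ^ 2

/-- The gradient part of `𝓔`, without the factor `α`. -/
def gradD (lam : ℝ) (U A φ σ : ℝ → ℝ → ℝ) (t θ : ℝ) : ℝ :=
  pth U t θ ^ 2 + coefA U t θ * pth A t θ ^ 2 + pth φ t θ ^ 2 / 4
    + coefσ lam φ t θ * pth σ t θ ^ 2

/-- The momentum density appearing in the energy flux and in the `θ`-constraint. -/
def momD (lam : ℝ) (U A φ σ : ℝ → ℝ → ℝ) (t θ : ℝ) : ℝ :=
  pt U t θ * pth U t θ + coefA U t θ * (pt A t θ * pth A t θ) + pt φ t θ * pth φ t θ / 4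
    + coefσ lam φ t θ * (pt σ t θ * pth σ t θ)

/-- The integrand of the energy `E`, in terms of `a = α^{-1/2}`, `c = α^{1/2}` and
`exp W = α Q² e^{2λφ + 2(η - U)}`. -/
def enD (lam : ℝ) (a c W U A φ σ : ℝ → ℝ → ℝ) (t θ : ℝ) : ℝ :=
  a t θ * kinD lam U A φ σ t θ + c t θ * gradD lam U A φ σ t θ + a t θ * exp (W t θ) / 4

/-- The part of the energy density that is dissipated at rate `2 / t`. -/
def disD (lam : ℝ) (a c U A φ σ : ℝ → ℝ → ℝ) (t θ : ℝ) : ℝ :=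
  a t θ * (pt U t θ ^ 2 + pt φ t θ ^ 2 / 4 + coefσ lam φ t θ * pt σ t θ ^ 2)
    + c t θ * (coefA U t θ * pth A t θ ^ 2)

/-- The Gowdy IIA system with `η` and `α` traded for `a = α^{-1/2}`, `c = α^{1/2}` and
`W = log (α Q² e^{2λφ + 2(η - U)})`; the wave equations are multiplied by `a`. The timelike
convergence condition is included as `tcc`. -/
structure Reduced (lam Tm Tp : ℝ) (a c W U A φ σ : ℝ → ℝ → ℝ) : Prop where
  smooth_a : SmoothSlab Tm Tp a
  smooth_c : SmoothSlab Tm Tp c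
  smooth_W : SmoothSlab Tm Tp W
  smooth_U : SmoothSlab Tm Tp U
  smooth_A : SmoothSlab Tm Tp A
  smooth_φ : SmoothSlab Tm Tp φ
  smooth_σ : SmoothSlab Tm Tp σ
  per_c : ∀ t θ, c t (θ + 2 * π) = c t θ
  per_W : ∀ t θ, W t (θ + 2 * π) = W t θ
  per_U : ∀ t θ, U t (θ + 2 * π) = U t θ
  per_A : ∀ t θ, A t (θ + 2 * π) = A t θ
  per_φ : ∀ t θ, φ t (θ + 2 * π) = φ t θ
  per_σ : ∀ t θ, σ t (θ + 2 * π) = σ t θ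
  a_pos : ∀ t θ, 0 < a t θ
  c_pos : ∀ t θ, 0 < c t θ
  a_mul_c : ∀ t θ, a t θ * c t θ = 1
  pt_a : ∀ t ∈ Ioo Tm Tp, ∀ θ, pt a t θ = t * exp (W t θ) * a t θ / 2
  pt_c : ∀ t ∈ Ioo Tm Tp, ∀ θ, pt c t θ = -(t * exp (W t θ) * c t θ / 2)
  pt_W : ∀ t ∈ Ioo Tm Tp, ∀ θ, pt W t θ =
    2 * t * (kinD lam U A φ σ t θ + c t θ ^ 2 * gradD lam U A φ σ t θ) - t * exp (W t θ) / 2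
      + 2 * lam * pt φ t θ - 2 * pt U t θ
  pth_W : ∀ t ∈ Ioo Tm Tp, ∀ θ, pth W t θ =
    4 * t * momD lam U A φ σ t θ + 2 * lam * pth φ t θ - 2 * pth U t θ
  wave_U : ∀ t ∈ Ioo Tm Tp, ∀ θ, a t θ * pt (pt U) t θ =
    c t θ * pth (pth U) t θ + pth c t θ * pth U t θ
      + a t θ * (-(pt U t θ / t) - t * exp (W t θ) / 2 * pt U t θ
        + 2 * coefA U t θ * pt A t θ ^ 2 + exp (W t θ) / 4)
      - 2 * c t θ * coefA U t θ * pth A t θ ^ 2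
  wave_A : ∀ t ∈ Ioo Tm Tp, ∀ θ, a t θ * pt (pt A) t θ =
    c t θ * pth (pth A) t θ + pth c t θ * pth A t θ
      + a t θ * (pt A t θ / t - t * exp (W t θ) / 2 * pt A t θ - 4 * pt A t θ * pt U t θ)
      + 4 * c t θ * pth A t θ * pth U t θ
  wave_φ : ∀ t ∈ Ioo Tm Tp, ∀ θ, a t θ * pt (pt φ) t θ =
    c t θ * pth (pth φ) t θ + pth c t θ * pth φ t θ
      + a t θ * (-(pt φ t θ / t) - t * exp (W t θ) / 2 * pt φ t θ
        + 4 * lam * coefσ lam φ t θ * pt σ t θ ^ 2 - lam * exp (W t θ))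
      - 4 * lam * c t θ * coefσ lam φ t θ * pth σ t θ ^ 2
  wave_σ : ∀ t ∈ Ioo Tm Tp, ∀ θ, a t θ * pt (pt σ) t θ =
    c t θ * pth (pth σ) t θ + pth c t θ * pth σ t θ
      + a t θ * (-(pt σ t θ / t) - t * exp (W t θ) / 2 * pt σ t θ
        - 2 * lam * pt φ t θ * pt σ t θ)
      + 2 * lam * c t θ * pth φ t θ * pth σ t θ
  tcc : ∀ t ∈ Ioo Tm Tp, ∀ θ, exp (W t θ) / 2 ≤
    pt φ t θ ^ 2 + 4 * coefσ lam φ t θ * pt σ t θ ^ 2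

namespace Reduced

variable {lam Tm Tp : ℝ} {a c W U A φ σ : ℝ → ℝ → ℝ}

lemma coefA_pos (U : ℝ → ℝ → ℝ) (hTm : 0 < Tm) {t : ℝ} (ht : t ∈ Ioo Tm Tp) (θ : ℝ) :
    0 < coefA U t θ := by
  have : 0 < t := hTm.trans ht.1
  unfold coefA; positivity

lemma coefσ_pos (lam : ℝ) (φ : ℝ → ℝ → ℝ) (t θ : ℝ) : 0 < coefσ lam φ t θ := by
  unfold coefσ; positivity

lemma kin_nonneg (lam : ℝ) (U A φ σ : ℝ → ℝ → ℝ) (hTm : 0 < Tm) {t : ℝ}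
    (ht : t ∈ Ioo Tm Tp) (θ : ℝ) :
    0 ≤ kinD lam U A φ σ t θ := by
  have := coefA_pos U hTm ht θ
  have := coefσ_pos lam φ t θ
  unfold kinD; positivity

lemma grad_nonneg (lam : ℝ) (U A φ σ : ℝ → ℝ → ℝ) (hTm : 0 < Tm) {t : ℝ}
    (ht : t ∈ Ioo Tm Tp) (θ : ℝ) :
    0 ≤ gradD lam U A φ σ t θ := by
  have := coefA_pos U hTm ht θ
  have := coefσ_pos lam φ t θ
  unfold gradD; positivity

lemma smooth_coefA (hU : SmoothSlab Tm Tp U) (hTm : 0 < Tm) :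
    SmoothSlab Tm Tp (coefA U) :=
  (((SmoothSlab.const 4).mul hU).exp).div ((SmoothSlab.const 4).mul (SmoothSlab.time.pow 2))
    fun t ht _ => by
      have : 0 < t := hTm.trans ht.1
      positivity

lemma smooth_coefσ (hφ : SmoothSlab Tm Tp φ) : SmoothSlab Tm Tp (coefσ lam φ) :=
  (((SmoothSlab.const (2 * lam)).mul hφ).exp).div (SmoothSlab.const 4) fun _ _ _ => by norm_num

lemma pt_coefA (hU : SmoothSlab Tm Tp U) (hTm : 0 < Tm) {t : ℝ} (ht : t ∈ Ioo Tm Tp) (θ : ℝ) :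
    pt (coefA U) t θ = coefA U t θ * (4 * pt U t θ - 2 / t) := by
  have h0 : 0 < t := hTm.trans ht.1
  have := ((((hU.hasDerivAt_t ht θ).const_mul 4).exp).div
    (((hasDerivAt_id t).pow 2).const_mul 4) (by simp; positivity)).deriv
  refine this.trans ?_
  simp only [coefA, Pi.pow_apply, id, Nat.cast_ofNat]
  field_simp
  ring

lemma pth_coefA (hU : SmoothSlab Tm Tp U) {t : ℝ} (ht : t ∈ Ioo Tm Tp) (θ : ℝ) :
    pth (coefA U) t θ = coefA U t θ * (4 * pth U t θ) := by
  refine ((((hU.hasDerivAt_θ ht θ).const_mul 4).exp).div_const (4 * t ^ 2)).deriv.trans ?_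
  simp only [coefA]
  ring

lemma pt_coefσ (hφ : SmoothSlab Tm Tp φ) {t : ℝ} (ht : t ∈ Ioo Tm Tp) (θ : ℝ) :
    pt (coefσ lam φ) t θ = coefσ lam φ t θ * (2 * lam * pt φ t θ) := by
  refine ((((hφ.hasDerivAt_t ht θ).const_mul (2 * lam)).exp).div_const 4).deriv.trans ?_
  simp only [coefσ]
  ring

lemma pth_coefσ (hφ : SmoothSlab Tm Tp φ) {t : ℝ} (ht : t ∈ Ioo Tm Tp) (θ : ℝ) :
    pth (coefσ lam φ) t θ = coefσ lam φ t θ * (2 * lam * pth φ t θ) := by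
  refine ((((hφ.hasDerivAt_θ ht θ).const_mul (2 * lam)).exp).div_const 4).deriv.trans ?_
  simp only [coefσ]
  ring

lemma smooth_kin (R : Reduced lam Tm Tp a c W U A φ σ)
    (hTm : 0 < Tm) : SmoothSlab Tm Tp (kinD lam U A φ σ) :=
  (((R.smooth_U.pt.pow 2).add ((smooth_coefA R.smooth_U hTm).mul (R.smooth_A.pt.pow 2))).add
    ((R.smooth_φ.pt.pow 2).div (SmoothSlab.const 4) fun _ _ _ => by norm_num)).add
    ((smooth_coefσ R.smooth_φ).mul (R.smooth_σ.pt.pow 2))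

lemma smooth_grad (R : Reduced lam Tm Tp a c W U A φ σ)
    (hTm : 0 < Tm) : SmoothSlab Tm Tp (gradD lam U A φ σ) :=
  (((R.smooth_U.pth.pow 2).add ((smooth_coefA R.smooth_U hTm).mul (R.smooth_A.pth.pow 2))).add
    ((R.smooth_φ.pth.pow 2).div (SmoothSlab.const 4) fun _ _ _ => by norm_num)).add
    ((smooth_coefσ R.smooth_φ).mul (R.smooth_σ.pth.pow 2))

lemma smooth_mom (R : Reduced lam Tm Tp a c W U A φ σ)
    (hTm : 0 < Tm) : SmoothSlab Tm Tp (momD lam U A φ σ) :=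
  (((R.smooth_U.pt.mul R.smooth_U.pth).add
    ((smooth_coefA R.smooth_U hTm).mul (R.smooth_A.pt.mul R.smooth_A.pth))).add
    ((R.smooth_φ.pt.mul R.smooth_φ.pth).div (SmoothSlab.const 4) fun _ _ _ => by norm_num)).add
    ((smooth_coefσ R.smooth_φ).mul (R.smooth_σ.pt.mul R.smooth_σ.pth))

lemma smooth_aV (R : Reduced lam Tm Tp a c W U A φ σ) :
    SmoothSlab Tm Tp (fun t θ => a t θ * exp (W t θ)) :=
  R.smooth_a.mul R.smooth_W.exp

lemma smooth_en (R : Reduced lam Tm Tp a c W U A φ σ)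
    (hTm : 0 < Tm) : SmoothSlab Tm Tp (enD lam a c W U A φ σ) :=
  ((R.smooth_a.mul (R.smooth_kin hTm)).add (R.smooth_c.mul (R.smooth_grad hTm))).add
    (R.smooth_aV.div (SmoothSlab.const 4) fun _ _ _ => by norm_num)

lemma smooth_dis (R : Reduced lam Tm Tp a c W U A φ σ)
    (hTm : 0 < Tm) : SmoothSlab Tm Tp (disD lam a c U A φ σ) :=
  (R.smooth_a.mul (((R.smooth_U.pt.pow 2).add
    ((R.smooth_φ.pt.pow 2).div (SmoothSlab.const 4) fun _ _ _ => by norm_num)).add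
    ((smooth_coefσ R.smooth_φ).mul (R.smooth_σ.pt.pow 2)))).add
    (R.smooth_c.mul ((smooth_coefA R.smooth_U hTm).mul (R.smooth_A.pth.pow 2)))

lemma smooth_flux (R : Reduced lam Tm Tp a c W U A φ σ)
    (hTm : 0 < Tm) :
    SmoothSlab Tm Tp (fun t θ => 2 * c t θ * momD lam U A φ σ t θ) :=
  ((SmoothSlab.const 2).mul R.smooth_c).mul (R.smooth_mom hTm)

/-! ### The energy and the oscillation of `W` -/

/-- Local energy balance: the energy density changes by a flux through the circle and by the
dissipation `-(2/t) disD`. All terms produced by the potential `exp W` cancel. -/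
lemma pt_en (R : Reduced lam Tm Tp a c W U A φ σ)
    (hTm : 0 < Tm) {t : ℝ} (ht : t ∈ Ioo Tm Tp) (θ : ℝ) :
    pt (enD lam a c W U A φ σ) t θ =
      pth (fun t θ => 2 * c t θ * momD lam U A φ σ t θ) t θ
        - 2 / t * disD lam a c U A φ σ t θ := by
  have h0 : 0 < t := hTm.trans ht.1
  have ha := R.smooth_a.hasDerivAt_t ht θ
  have hc := R.smooth_c.hasDerivAt_t ht θ
  have hX := (smooth_coefA R.smooth_U hTm).hasDerivAt_t ht θ
  have hY := (smooth_coefσ (lam := lam) R.smooth_φ).hasDerivAt_t ht θ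
  have hkin := ((((R.smooth_U.pt.hasDerivAt_t ht θ).pow 2).add
    (hX.mul ((R.smooth_A.pt.hasDerivAt_t ht θ).pow 2))).add
    (((R.smooth_φ.pt.hasDerivAt_t ht θ).pow 2).div_const 4)).add
    (hY.mul ((R.smooth_σ.pt.hasDerivAt_t ht θ).pow 2))
  have hgrad := ((((R.smooth_U.pth.hasDerivAt_t ht θ).pow 2).add
    (hX.mul ((R.smooth_A.pth.hasDerivAt_t ht θ).pow 2))).add
    (((R.smooth_φ.pth.hasDerivAt_t ht θ).pow 2).div_const 4)).add
    (hY.mul ((R.smooth_σ.pth.hasDerivAt_t ht θ).pow 2))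
  have hen := (((ha.mul hkin).add (hc.mul hgrad)).add
    ((ha.mul (R.smooth_W.hasDerivAt_t ht θ).exp).div_const 4)).deriv
  have hmom := ((((R.smooth_U.pt.hasDerivAt_θ ht θ).mul (R.smooth_U.pth.hasDerivAt_θ ht θ)).add
    (((smooth_coefA R.smooth_U hTm).hasDerivAt_θ ht θ).mul
      ((R.smooth_A.pt.hasDerivAt_θ ht θ).mul (R.smooth_A.pth.hasDerivAt_θ ht θ)))).add
    (((R.smooth_φ.pt.hasDerivAt_θ ht θ).mul (R.smooth_φ.pth.hasDerivAt_θ ht θ)).div_const 4)).add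
    (((smooth_coefσ (lam := lam) R.smooth_φ).hasDerivAt_θ ht θ).mul
      ((R.smooth_σ.pt.hasDerivAt_θ ht θ).mul (R.smooth_σ.pth.hasDerivAt_θ ht θ)))
  have hflux := (((R.smooth_c.hasDerivAt_θ ht θ).const_mul 2).mul hmom).deriv
  have e1 : pt (enD lam a c W U A φ σ) t θ = _ := hen
  have e2 : pth (fun t θ => 2 * c t θ * momD lam U A φ σ t θ) t θ = _ := hflux
  rw [e1, e2]
  simp only [Pi.add_apply, Pi.mul_apply, Pi.pow_apply]
  rw [pt_coefA R.smooth_U hTm ht, pth_coefA R.smooth_U ht, pt_coefσ R.smooth_φ ht,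
    pth_coefσ R.smooth_φ ht, R.pt_a t ht, R.pt_c t ht, R.pt_W t ht, R.smooth_U.pth_pt ht,
    R.smooth_A.pth_pt ht, R.smooth_φ.pth_pt ht, R.smooth_σ.pth_pt ht]
  have wU := R.wave_U t ht θ
  have wA := R.wave_A t ht θ
  have wφ := R.wave_φ t ht θ
  have wσ := R.wave_σ t ht θ
  have hac := R.a_mul_c t θ
  simp only [disD, kinD, gradD]
  generalize exp (W t θ) = V at *
  generalize coefA U t θ = X at *
  generalize coefσ lam φ t θ = Y at *
  generalize hti : t⁻¹ = ti at *
  have htt : t * ti = 1 := by rw [← hti]; field_simp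
  simp only [div_eq_mul_inv, hti] at *
  push_cast
  linear_combination 2 * pt U t θ * wU + 2 * X * pt A t θ * wA + (1 / 2) * pt φ t θ * wφ
    + 2 * Y * pt σ t θ * wσ
    + (1 / 2) * t * V * c t θ * (pth U t θ ^ 2 + X * pth A t θ ^ 2 + pth φ t θ ^ 2 / 4
      + Y * pth σ t θ ^ 2) * hac

lemma en_pos (R : Reduced lam Tm Tp a c W U A φ σ)
    (hTm : 0 < Tm) {t : ℝ} (ht : t ∈ Ioo Tm Tp) (θ : ℝ) :
    0 < enD lam a c W U A φ σ t θ := by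
  have := kin_nonneg lam U A φ σ hTm ht θ
  have := grad_nonneg lam U A φ σ hTm ht θ
  have := R.a_pos t θ
  have := R.c_pos t θ
  unfold enD; positivity

lemma dis_nonneg (R : Reduced lam Tm Tp a c W U A φ σ)
    (hTm : 0 < Tm) {t : ℝ} (ht : t ∈ Ioo Tm Tp) (θ : ℝ) :
    0 ≤ disD lam a c U A φ σ t θ := by
  have := coefA_pos U hTm ht θ
  have := coefσ_pos lam φ t θ
  have := R.a_pos t θ
  have := R.c_pos t θ
  unfold disD; positivity

lemma dis_le_en (R : Reduced lam Tm Tp a c W U A φ σ)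
    (hTm : 0 < Tm) {t : ℝ} (ht : t ∈ Ioo Tm Tp) (θ : ℝ) :
    disD lam a c U A φ σ t θ ≤ enD lam a c W U A φ σ t θ := by
  have hX := coefA_pos U hTm ht θ
  have hY := coefσ_pos lam φ t θ
  have ha := R.a_pos t θ
  have hc := R.c_pos t θ
  have h1 : 0 ≤ a t θ * (coefA U t θ * pt A t θ ^ 2) := by positivity
  have h2 : 0 ≤ c t θ * (pth U t θ ^ 2 + pth φ t θ ^ 2 / 4
    + coefσ lam φ t θ * pth σ t θ ^ 2) := by positivity
  have h3 : 0 ≤ a t θ * exp (W t θ) / 4 := by positivity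
  unfold disD enD kinD gradD
  linarith

lemma hasDerivAt_energy (R : Reduced lam Tm Tp a c W U A φ σ)
    (hTm : 0 < Tm) {t : ℝ} (ht : t ∈ Ioo Tm Tp) :
    HasDerivAt (fun s => ∫ θ in (0 : ℝ)..(2 * π), enD lam a c W U A φ σ s θ)
      (-(2 / t * ∫ θ in (0 : ℝ)..(2 * π), disD lam a c U A φ σ t θ)) t := by
  convert (R.smooth_en hTm).hasDerivAt_integral ht using 1
  simp only [R.pt_en hTm ht]
  have hF := R.smooth_flux hTm
  rw [intervalIntegral.integral_sub (SmoothSlab.intble hF.pth ht _ _)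
    ((SmoothSlab.intble (R.smooth_dis hTm) ht _ _).const_mul _),
    intervalIntegral.integral_const_mul,
    intervalIntegral.integral_eq_sub_of_hasDerivAt (fun x _ => hF.hasDerivAt_θ ht x)
      (SmoothSlab.intble hF.pth ht _ _)]
  have hper : 2 * c t (0 + 2 * π) * momD lam U A φ σ t (0 + 2 * π)
      = 2 * c t 0 * momD lam U A φ σ t 0 := by
    simp only [momD, coefA, coefσ, R.per_c, R.per_U, R.per_φ, pt_periodic R.per_U,
      pt_periodic R.per_A, pt_periodic R.per_φ, pt_periodic R.per_σ, pth_periodic R.per_U,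
      pth_periodic R.per_A, pth_periodic R.per_φ, pth_periodic R.per_σ]
  rw [zero_add] at hper
  rw [hper]
  ring

/-- Towards the past the energy is bounded below by its value at `ti` and above by
`(ti / Tm)²` times it: `E` is nonincreasing and `t² E` is nondecreasing. -/
lemma energy_bounds (R : Reduced lam Tm Tp a c W U A φ σ)
    (hTm : 0 < Tm) {ti : ℝ} (hti : ti < Tp) {t : ℝ} (ht : t ∈ Ioc Tm ti) :
    (∫ θ in (0 : ℝ)..(2 * π), enD lam a c W U A φ σ ti θ)
        ≤ ∫ θ in (0 : ℝ)..(2 * π), enD lam a c W U A φ σ t θ ∧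
    (∫ θ in (0 : ℝ)..(2 * π), enD lam a c W U A φ σ t θ)
        ≤ ti ^ 2 * (∫ θ in (0 : ℝ)..(2 * π), enD lam a c W U A φ σ ti θ) / Tm ^ 2 := by
  have hmem : ∀ s ∈ Ioc Tm ti, s ∈ Ioo Tm Tp := fun s hs => ⟨hs.1, hs.2.trans_lt hti⟩
  have hpi : (0 : ℝ) ≤ 2 * π := by positivity
  have hdis : ∀ s ∈ Ioc Tm ti, 0 ≤ ∫ θ in (0 : ℝ)..(2 * π), disD lam a c U A φ σ s θ :=
    fun s hs => intervalIntegral.integral_nonneg hpi fun θ _ => R.dis_nonneg hTm (hmem s hs) θ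
  have hle : ∀ s ∈ Ioc Tm ti, (∫ θ in (0 : ℝ)..(2 * π), disD lam a c U A φ σ s θ)
      ≤ ∫ θ in (0 : ℝ)..(2 * π), enD lam a c W U A φ σ s θ :=
    fun s hs => intervalIntegral.integral_mono hpi
      (SmoothSlab.intble (R.smooth_dis hTm) (hmem s hs) _ _)
      (SmoothSlab.intble (R.smooth_en hTm) (hmem s hs) _ _)
      fun θ => R.dis_le_en hTm (hmem s hs) θ
  constructor
  · have := mono_of_deriv (fun s hs => (R.hasDerivAt_energy hTm (hmem s hs)).neg)
      (fun s hs => by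
        have := hdis s hs
        have : 0 < s := hTm.trans hs.1
        rw [neg_neg]; positivity) ht
    simpa using this
  · have key := mono_of_deriv
      (fun s hs => ((hasDerivAt_id s).pow 2).mul (R.hasDerivAt_energy hTm (hmem s hs)))
      (fun s hs => by
        have h0 : 0 < s := hTm.trans hs.1
        have h1 := hle s hs
        simp only [id, Pi.pow_apply]
        have : ((2 : ℕ) : ℝ) * s ^ (2 - 1) * 1
            * (∫ θ in (0 : ℝ)..(2 * π), enD lam a c W U A φ σ s θ)
            + s ^ 2 * -(2 / s * ∫ θ in (0 : ℝ)..(2 * π), disD lam a c U A φ σ s θ)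
            = 2 * s * ((∫ θ in (0 : ℝ)..(2 * π), enD lam a c W U A φ σ s θ)
              - ∫ θ in (0 : ℝ)..(2 * π), disD lam a c U A φ σ s θ) := by
          field_simp
          push_cast
          ring
        rw [this]
        exact mul_nonneg (by positivity) (sub_nonneg.2 h1)) ht
    simp only [Pi.mul_apply, Pi.pow_apply, id] at key
    rw [le_div_iff₀ (by positivity)]
    have hE : 0 ≤ ∫ θ in (0 : ℝ)..(2 * π), enD lam a c W U A φ σ t θ :=
      (hdis t ht).trans (hle t ht)
    refine le_trans ?_ key
    rw [mul_comm]
    gcongr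
    exact ht.1.le

/-- Pointwise control of the spatial derivative of `W` by the energy density and `a`. -/
lemma abs_pth_W_le (R : Reduced lam Tm Tp a c W U A φ σ)
    (hTm : 0 < Tm) {t : ℝ} (ht : t ∈ Ioo Tm Tp) (θ : ℝ) :
    |pth W t θ| ≤ (2 * t + 4 * |lam| + 2) * enD lam a c W U A φ σ t θ
      + (2 * |lam| + 2) * a t θ := by
  have h0 : 0 < t := hTm.trans ht.1
  have hX := coefA_pos U hTm ht θ
  have hY := coefσ_pos lam φ t θ
  have ha := R.a_pos t θ
  have hc := R.c_pos t θ
  have hac := R.a_mul_c t θ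
  have hkin := kin_nonneg lam U A φ σ hTm ht θ
  have hgrad := grad_nonneg lam U A φ σ hTm ht θ
  have hV : 0 ≤ a t θ * exp (W t θ) / 4 := by positivity
  -- `2|xy| ≤ a x² + c y²` because `a c = 1`
  have amgm : ∀ x y : ℝ, 2 * |x * y| ≤ a t θ * x ^ 2 + c t θ * y ^ 2 := by
    intro x y
    have h1 : 0 ≤ c t θ * (a t θ * x - y) ^ 2 := by positivity
    have h2 : 0 ≤ c t θ * (a t θ * x + y) ^ 2 := by positivity
    have e1 : c t θ * (a t θ * x - y) ^ 2 = a t θ * x ^ 2 + c t θ * y ^ 2 - 2 * (x * y) := by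
      linear_combination (a t θ * x ^ 2 - 2 * x * y) * hac
    have e2 : c t θ * (a t θ * x + y) ^ 2 = a t θ * x ^ 2 + c t θ * y ^ 2 + 2 * (x * y) := by
      linear_combination (a t θ * x ^ 2 + 2 * x * y) * hac
    rcases abs_cases (x * y) with h | h <;> rw [h.1] <;> linarith
  have hmom : 2 * |momD lam U A φ σ t θ| ≤ enD lam a c W U A φ σ t θ := by
    have h1 := amgm (pt U t θ) (pth U t θ)
    have h2 := mul_le_mul_of_nonneg_left (amgm (pt A t θ) (pth A t θ)) hX.le
    have h3 := amgm (pt φ t θ) (pth φ t θ)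
    have h4 := mul_le_mul_of_nonneg_left (amgm (pt σ t θ) (pth σ t θ)) hY.le
    have h5 : |momD lam U A φ σ t θ| ≤ |pt U t θ * pth U t θ|
        + coefA U t θ * |pt A t θ * pth A t θ| + |pt φ t θ * pth φ t θ| / 4
        + coefσ lam φ t θ * |pt σ t θ * pth σ t θ| := by
      unfold momD
      refine (abs_add_le _ _).trans (add_le_add ((abs_add_le _ _).trans
        (add_le_add ((abs_add_le _ _).trans (add_le_add le_rfl ?_)) ?_)) ?_)
      · rw [abs_mul, abs_of_pos hX]
      · rw [abs_div]; norm_num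
      · rw [abs_mul (coefσ lam φ t θ), abs_of_pos hY]
    unfold enD kinD gradD
    linarith
  have hcg : c t θ * gradD lam U A φ σ t θ ≤ enD lam a c W U A φ σ t θ := by
    have : 0 ≤ a t θ * kinD lam U A φ σ t θ := by positivity
    unfold enD
    linarith
  have hU : 2 * |pth U t θ| ≤ a t θ + enD lam a c W U A φ σ t θ := by
    have h1 := amgm 1 (pth U t θ)
    have h2 : 0 ≤ c t θ * (coefA U t θ * pth A t θ ^ 2 + pth φ t θ ^ 2 / 4
      + coefσ lam φ t θ * pth σ t θ ^ 2) := by positivity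
    rw [one_mul] at h1
    unfold gradD at hcg
    linarith
  have hφ : 2 * |pth φ t θ| ≤ a t θ + 4 * enD lam a c W U A φ σ t θ := by
    have h1 := amgm 1 (pth φ t θ)
    have h2 : 0 ≤ c t θ * (pth U t θ ^ 2 + coefA U t θ * pth A t θ ^ 2
      + coefσ lam φ t θ * pth σ t θ ^ 2) := by positivity
    rw [one_mul] at h1
    unfold gradD at hcg
    linarith
  rw [R.pth_W t ht]
  have h1 : |4 * t * momD lam U A φ σ t θ + 2 * lam * pth φ t θ - 2 * pth U t θ|
      ≤ 4 * t * |momD lam U A φ σ t θ| + 2 * |lam| * |pth φ t θ| + 2 * |pth U t θ| := by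
    refine (abs_sub _ _).trans (add_le_add ((abs_add_le _ _).trans (add_le_add ?_ ?_)) ?_)
    · rw [abs_mul, abs_of_pos (by positivity : 0 < 4 * t)]
    · rw [abs_mul, abs_mul, abs_two]
    · rw [abs_mul, abs_two]
  have h2 := mul_le_mul_of_nonneg_left hφ (abs_nonneg lam)
  have h3 := mul_le_mul_of_nonneg_left hmom h0.le
  have h4 : 0 ≤ |lam| * a t θ := by positivity
  have := en_pos R hTm ht θ
  linarith

/-- The oscillation of `W` over the circle is bounded by the energy and `∫ a`. -/
lemma osc_W (R : Reduced lam Tm Tp a c W U A φ σ)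
    (hTm : 0 < Tm) {t : ℝ} (ht : t ∈ Ioo Tm Tp) {x y : ℝ}
    (hx : x ∈ Icc 0 (2 * π)) (hy : y ∈ Icc 0 (2 * π)) :
    W t y - W t x ≤
      (2 * t + 4 * |lam| + 2) * (∫ θ in (0 : ℝ)..(2 * π), enD lam a c W U A φ σ t θ)
      + (2 * |lam| + 2) * ∫ θ in (0 : ℝ)..(2 * π), a t θ := by
  have hpi : (0 : ℝ) ≤ 2 * π := by positivity
  have hW' := R.smooth_W.pth
  rw [← intervalIntegral.integral_eq_sub_of_hasDerivAt
    (fun z _ => R.smooth_W.hasDerivAt_θ ht z) (SmoothSlab.intble hW' ht _ _)]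
  have h1 : |∫ θ in x..y, pth W t θ| ≤ ∫ θ in (0 : ℝ)..(2 * π), |pth W t θ| := by
    rw [intervalIntegral.integral_of_le hpi]
    exact (intervalIntegral.norm_integral_le_integral_norm_uIoc (μ := volume)
      (f := fun θ => pth W t θ)).trans
      (setIntegral_mono_set (hW'.intble ht _ _).abs.1 (Eventually.of_forall fun _ => norm_nonneg _)
        (Ioc_subset_Ioc (le_min hx.1 hy.1) (max_le hx.2 hy.2)).eventuallyLE)
  refine (le_abs_self _).trans (h1.trans ?_)
  rw [← intervalIntegral.integral_const_mul, ← intervalIntegral.integral_const_mul,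
    ← intervalIntegral.integral_add ((SmoothSlab.intble (R.smooth_en hTm) ht _ _).const_mul _)
      ((SmoothSlab.intble R.smooth_a ht _ _).const_mul _)]
  exact intervalIntegral.integral_mono hpi (SmoothSlab.intble hW' ht _ _).abs
    (((SmoothSlab.intble (R.smooth_en hTm) ht _ _).const_mul _).add
      ((SmoothSlab.intble R.smooth_a ht _ _).const_mul _)) fun θ => R.abs_pth_W_le hTm ht θ

/-! ### Upper bound for `W` -/

/-- Pointwise lower bound for `∂ₜW`, weighted by `a`. The terms `2λφ̇ - 2U̇` are absorbed into a
ninth of the energy. -/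
lemma a_pt_W_ge (R : Reduced lam Tm Tp a c W U A φ σ)
    (hTm : 0 < Tm) {t : ℝ} (ht : t ∈ Ioo Tm Tp) (θ : ℝ) :
    16 / 9 * t * enD lam a c W U A φ σ t θ - t * (a t θ * exp (W t θ))
      - (9 / 2 + 18 * lam ^ 2) / Tm * a t θ ≤ a t θ * pt W t θ := by
  have h0 : 0 < t := hTm.trans ht.1
  have hX := coefA_pos U hTm ht θ
  have hY := coefσ_pos lam φ t θ
  have ha := R.a_pos t θ
  have hc := R.c_pos t θ
  have hac := R.a_mul_c t θ
  have hgrad := grad_nonneg lam U A φ σ hTm ht θ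
  have hid : a t θ * pt W t θ = 2 * t * enD lam a c W U A φ σ t θ
      - t * (a t θ * exp (W t θ)) + a t θ * (2 * lam * pt φ t θ - 2 * pt U t θ) := by
    rw [R.pt_W t ht]
    unfold enD
    linear_combination 2 * t * c t θ * gradD lam U A φ σ t θ * hac
  have he : a t θ * (pt U t θ ^ 2 + pt φ t θ ^ 2 / 4) ≤ enD lam a c W U A φ σ t θ := by
    have h1 : 0 ≤ a t θ * (coefA U t θ * pt A t θ ^ 2 + coefσ lam φ t θ * pt σ t θ ^ 2) := by
      positivity
    have h2 : 0 ≤ c t θ * gradD lam U A φ σ t θ := by positivity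
    have h3 : 0 ≤ a t θ * exp (W t θ) / 4 := by positivity
    unfold enD kinD
    linarith
  have hen := R.en_pos hTm ht θ
  have h1 : 2 / 9 * Tm * (a t θ * (pt U t θ ^ 2 + pt φ t θ ^ 2 / 4))
      ≤ 2 / 9 * t * enD lam a c W U A φ σ t θ := by
    have := ht.1.le
    gcongr
  have h2 : 0 ≤ a t θ * (2 / 9 * Tm * (pt U t θ - 9 / (2 * Tm)) ^ 2
      + Tm / 18 * (pt φ t θ + 18 * lam / Tm) ^ 2) := by positivity
  have h3 : a t θ * (2 / 9 * Tm * (pt U t θ - 9 / (2 * Tm)) ^ 2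
      + Tm / 18 * (pt φ t θ + 18 * lam / Tm) ^ 2)
      = 2 / 9 * Tm * (a t θ * (pt U t θ ^ 2 + pt φ t θ ^ 2 / 4))
        + a t θ * (2 * lam * pt φ t θ - 2 * pt U t θ)
        + (9 / 2 + 18 * lam ^ 2) / Tm * a t θ := by
    field_simp
    ring
  rw [hid]
  linarith

/-- The timelike convergence condition bounds the potential by a multiple of the energy density. -/
lemma aV_le_en (R : Reduced lam Tm Tp a c W U A φ σ)
    (hTm : 0 < Tm) {t : ℝ} (ht : t ∈ Ioo Tm Tp) (θ : ℝ) :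
    3 / 8 * (a t θ * exp (W t θ)) ≤ enD lam a c W U A φ σ t θ := by
  have hX := coefA_pos U hTm ht θ
  have ha := R.a_pos t θ
  have hc := R.c_pos t θ
  have hgrad := grad_nonneg lam U A φ σ hTm ht θ
  have h1 : 0 ≤ a t θ * (pt U t θ ^ 2 + coefA U t θ * pt A t θ ^ 2) := by positivity
  have h2 : 0 ≤ c t θ * gradD lam U A φ σ t θ := by positivity
  have h3 := mul_le_mul_of_nonneg_left (R.tcc t ht θ) ha.le
  unfold enD kinD
  linarith

lemma hasDerivAt_L (R : Reduced lam Tm Tp a c W U A φ σ)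
    {t : ℝ} (ht : t ∈ Ioo Tm Tp) :
    HasDerivAt (fun s => ∫ θ in (0 : ℝ)..(2 * π), a s θ)
      (t / 2 * ∫ θ in (0 : ℝ)..(2 * π), a t θ * exp (W t θ)) t := by
  convert R.smooth_a.hasDerivAt_integral ht using 1
  rw [← intervalIntegral.integral_const_mul]
  congr 1
  ext θ
  rw [R.pt_a t ht]
  ring

/-- Upper bound for `W` towards the past: the weighted mean `m = ∫ a W / ∫ a` and
`l = log ∫ a` satisfy the hypotheses of `ode_bound`, and `W` differs from `m` by at most its
oscillation. -/
theorem W_bounded (R : Reduced lam Tm Tp a c W U A φ σ)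
    (hTm : 0 < Tm) {ti : ℝ} (hTi : Tm < ti) (hti : ti < Tp) :
    ∃ M, ∀ t ∈ Ioc Tm ti, ∀ θ, W t θ ≤ M := by
  have hmem : ∀ s ∈ Ioc Tm ti, s ∈ Ioo Tm Tp := fun s hs => ⟨hs.1, hs.2.trans_lt hti⟩
  have htimem : ti ∈ Ioc Tm ti := ⟨hTi, le_rfl⟩
  have hti0 : 0 < ti := hTm.trans hTi
  have hpi : (0 : ℝ) ≤ 2 * π := by positivity
  have hsN : SmoothSlab Tm Tp (fun t θ => a t θ * W t θ) := R.smooth_a.mul R.smooth_W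
  set E : ℝ → ℝ := fun s => ∫ θ in (0 : ℝ)..(2 * π), enD lam a c W U A φ σ s θ with hE
  set L : ℝ → ℝ := fun s => ∫ θ in (0 : ℝ)..(2 * π), a s θ with hL
  set P : ℝ → ℝ := fun s => ∫ θ in (0 : ℝ)..(2 * π), a s θ * exp (W s θ) with hP
  set N : ℝ → ℝ := fun s => ∫ θ in (0 : ℝ)..(2 * π), a s θ * W s θ with hN
  set N' : ℝ → ℝ := fun s => ∫ θ in (0 : ℝ)..(2 * π), pt (fun t θ => a t θ * W t θ) s θ with hN'
  have hEpos : 0 < E ti := SmoothSlab.integral_pos_of_pos (R.smooth_en hTm) (hmem ti htimem)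
    fun θ => R.en_pos hTm (hmem ti htimem) θ
  have hLpos : ∀ t ∈ Ioc Tm ti, 0 < L t := fun t ht =>
    SmoothSlab.integral_pos_of_pos R.smooth_a (hmem t ht) fun θ => R.a_pos t θ
  have hPpos : ∀ t ∈ Ioc Tm ti, 0 < P t := fun t ht =>
    SmoothSlab.integral_pos_of_pos R.smooth_aV (hmem t ht) fun θ => mul_pos (R.a_pos t θ) (exp_pos _)
  have hLd : ∀ t ∈ Ioc Tm ti, HasDerivAt L (t / 2 * P t) t :=
    fun t ht => R.hasDerivAt_L (hmem t ht)
  have hNd : ∀ t ∈ Ioc Tm ti, HasDerivAt N (N' t) t :=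
    fun t ht => hsN.hasDerivAt_integral (hmem t ht)
  have hLle : ∀ t ∈ Ioc Tm ti, L t ≤ L ti := fun t ht =>
    mono_of_deriv hLd (fun s hs => by
      have := hPpos s hs
      have : 0 < s := hTm.trans hs.1
      positivity) ht
  have hEb : ∀ t ∈ Ioc Tm ti, E ti ≤ E t ∧ E t ≤ ti ^ 2 * E ti / Tm ^ 2 := fun t ht =>
    R.energy_bounds hTm hti ht
  -- a bound for the spatial oscillation of `W` that is uniform in time
  set C0 := (2 * ti + 4 * |lam| + 2) * (ti ^ 2 * E ti / Tm ^ 2) + (2 * |lam| + 2) * L ti with hC0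
  have hosc : ∀ t ∈ Ioc Tm ti, ∀ x ∈ Icc 0 (2 * π), ∀ y ∈ Icc 0 (2 * π),
      W t y - W t x ≤ C0 := by
    intro t ht x hx y hy
    refine (R.osc_W hTm (hmem t ht) hx hy).trans ?_
    have h1 := (hEb t ht).2
    have h2 := hLle t ht
    have h3 : 0 < E t := hEpos.trans_le (hEb t ht).1
    have h4 := ht.2
    exact add_le_add (mul_le_mul (by linarith) h1 h3.le (by positivity))
      (mul_le_mul_of_nonneg_left h2 (by positivity))
  have hWm : ∀ t ∈ Ioc Tm ti, ∀ y ∈ Icc 0 (2 * π), W t y ≤ N t / L t + C0 := by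
    intro t ht y hy
    have h1 : ∫ θ in (0 : ℝ)..(2 * π), W t y * a t θ
        ≤ ∫ θ in (0 : ℝ)..(2 * π), (a t θ * W t θ + C0 * a t θ) := by
      refine intervalIntegral.integral_mono_on hpi
        ((SmoothSlab.intble R.smooth_a (hmem t ht) _ _).const_mul _)
        ((SmoothSlab.intble hsN (hmem t ht) _ _).add
          ((SmoothSlab.intble R.smooth_a (hmem t ht) _ _).const_mul _)) fun θ hθ => ?_
      have := mul_le_mul_of_nonneg_left (hosc t ht θ hθ y hy) (R.a_pos t θ).le
      linarith
    rw [intervalIntegral.integral_add (SmoothSlab.intble hsN (hmem t ht) _ _)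
      ((SmoothSlab.intble R.smooth_a (hmem t ht) _ _).const_mul _),
      intervalIntegral.integral_const_mul, intervalIntegral.integral_const_mul] at h1
    change W t y * L t ≤ N t + C0 * L t at h1
    have := hLpos t ht
    rw [← sub_le_iff_le_add, le_div_iff₀ this]
    linarith
  set C1 := (9 / 2 + 18 * lam ^ 2) / Tm with hC1
  -- growth of the weighted mean; the covariance of `W` and `exp W` enters with a good sign
  have hgrow : ∀ t ∈ Ioc Tm ti, 16 / 9 * t * E t - t * P t - C1 * L t
      ≤ N' t - N t / L t * (t / 2 * P t) := by
    intro t ht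
    have ht' := hmem t ht
    have h0 : 0 < t := hTm.trans ht.1
    set μ := N t / L t with hμ
    have iE := (R.smooth_en hTm).intble ht' 0 (2 * π)
    have iP := R.smooth_aV.intble ht' 0 (2 * π)
    have ia := R.smooth_a.intble ht' 0 (2 * π)
    have iN := hsN.intble ht' 0 (2 * π)
    have iN' := hsN.pt.intble ht' 0 (2 * π)
    have hpt : ∀ θ, 16 / 9 * t * enD lam a c W U A φ σ t θ - t * (a t θ * exp (W t θ))
        - C1 * a t θ + t / 2 * exp μ * (a t θ * W t θ - μ * a t θ)
        ≤ pt (fun t θ => a t θ * W t θ) t θ - μ * t / 2 * (a t θ * exp (W t θ)) := by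
      intro θ
      have e : pt (fun t θ => a t θ * W t θ) t θ = _ :=
        ((R.smooth_a.hasDerivAt_t ht' θ).mul (R.smooth_W.hasDerivAt_t ht' θ)).deriv
      rw [e, R.pt_a t ht']
      have h1 := R.a_pt_W_ge hTm ht' θ
      have ha := R.a_pos t θ
      have h2 : 0 ≤ t / 2 * a t θ * ((exp (W t θ) - exp μ) * (W t θ - μ)) := by
        refine mul_nonneg (by positivity) ?_
        rcases le_total (W t θ) μ with h | h
        · exact mul_nonneg_of_nonpos_of_nonpos (sub_nonpos.2 (exp_le_exp.2 h)) (sub_nonpos.2 h)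
        · exact mul_nonneg (sub_nonneg.2 (exp_le_exp.2 h)) (sub_nonneg.2 h)
      linarith
    have key := intervalIntegral.integral_mono hpi
      ((((iE.const_mul (16 / 9 * t)).sub (iP.const_mul t)).sub (ia.const_mul C1)).add
        ((iN.sub (ia.const_mul μ)).const_mul (t / 2 * exp μ)))
      (iN'.sub (iP.const_mul (μ * t / 2))) hpt
    rw [intervalIntegral.integral_add
        (((iE.const_mul (16 / 9 * t)).sub (iP.const_mul t)).sub (ia.const_mul C1))
        ((iN.sub (ia.const_mul μ)).const_mul (t / 2 * exp μ)),
      intervalIntegral.integral_sub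
        ((iE.const_mul (16 / 9 * t)).sub (iP.const_mul t)) (ia.const_mul C1),
      intervalIntegral.integral_sub (iE.const_mul (16 / 9 * t)) (iP.const_mul t),
      intervalIntegral.integral_sub iN' (iP.const_mul (μ * t / 2)),
      intervalIntegral.integral_const_mul, intervalIntegral.integral_const_mul,
      intervalIntegral.integral_const_mul, intervalIntegral.integral_const_mul,
      intervalIntegral.integral_const_mul,
      intervalIntegral.integral_sub iN (ia.const_mul μ),
      intervalIntegral.integral_const_mul] at key
    change 16 / 9 * t * E t - t * P t - C1 * L t + t / 2 * exp μ * (N t - μ * L t)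
      ≤ N' t - μ * t / 2 * P t at key
    have hz : N t - μ * L t = 0 := by
      rw [hμ, div_mul_cancel₀ _ (hLpos t ht).ne', sub_self]
    rw [hz] at key
    linarith
  have hPE : ∀ t ∈ Ioc Tm ti, 3 / 8 * P t ≤ E t := by
    intro t ht
    have := intervalIntegral.integral_mono hpi
      ((R.smooth_aV.intble (hmem t ht) 0 (2 * π)).const_mul (3 / 8))
      ((R.smooth_en hTm).intble (hmem t ht) 0 (2 * π)) fun θ => R.aV_le_en hTm (hmem t ht) θ
    rwa [intervalIntegral.integral_const_mul] at this
  have hsum : ∀ t ∈ Ioc Tm ti, 16 / 9 * t * E t / L t - C1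
      ≤ (N' t * L t - N t * (t / 2 * P t)) / L t ^ 2 + 2 * (t / 2 * P t / L t) := by
    intro t ht
    have hl := hLpos t ht
    have h1 := hgrow t ht
    have e1 : (N' t * L t - N t * (t / 2 * P t)) / L t ^ 2 + 2 * (t / 2 * P t / L t)
        = (N' t - N t / L t * (t / 2 * P t) + t * P t) / L t := by
      field_simp
    have e2 : 16 / 9 * t * E t / L t - C1 = (16 / 9 * t * E t - C1 * L t) / L t := by
      field_simp
    rw [e1, e2]
    gcongr
    linarith
  obtain ⟨M, hM⟩ := ode_bound (Tm := Tm) (ti := ti) (C := C1) (C2 := ti / 2 * exp C0)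
    (k := 16 / 9 * Tm * E ti) (by positivity) (by positivity)
    (m := fun t => N t / L t) (l := fun t => Real.log (L t))
    (fun t ht => (hNd t ht).div (hLd t ht) (hLpos t ht).ne')
    (fun t ht => (hLd t ht).log (hLpos t ht).ne')
    (fun t ht => by
      refine le_trans ?_ (hsum t ht)
      have h0 : 0 < t := hTm.trans ht.1
      have hl := hLpos t ht
      have h1 := mul_le_mul_of_nonneg_left (hPE t ht) h0.le
      have e1 : 4 / 3 * (t / 2 * P t / L t) = (16 / 9 * (t * (3 / 8 * P t))) / L t := by ring
      rw [e1]
      refine sub_le_sub_right (div_le_div_of_nonneg_right ?_ hl.le) _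
      linarith)
    (fun t ht => by
      refine le_trans ?_ (hsum t ht)
      have h0 : 0 < t := hTm.trans ht.1
      have hl := hLpos t ht
      rw [exp_neg, exp_log hl, ← div_eq_mul_inv]
      have h1 := (hEb t ht).1
      have h2 := ht.1.le
      gcongr)
    (fun t ht => by
      have h0 : 0 < t := hTm.trans ht.1
      have hl := hLpos t ht
      have h1 : P t ≤ exp (N t / L t + C0) * L t := by
        rw [hL, ← intervalIntegral.integral_const_mul]
        refine intervalIntegral.integral_mono_on hpi (R.smooth_aV.intble (hmem t ht) _ _)
          ((R.smooth_a.intble (hmem t ht) _ _).const_mul _) fun θ hθ => ?_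
        rw [mul_comm]
        exact mul_le_mul_of_nonneg_right (exp_le_exp.2 (hWm t ht θ hθ)) (R.a_pos t θ).le
      rw [div_le_iff₀ hl]
      have h2 := ht.2
      calc t / 2 * P t ≤ ti / 2 * (exp (N t / L t + C0) * L t) := by
            have := hPpos t ht
            gcongr
        _ = ti / 2 * exp C0 * exp (N t / L t) * L t := by rw [exp_add]; ring)
    (by positivity)
  refine ⟨M + C0, fun t ht θ => ?_⟩
  obtain ⟨y, hy, hyW⟩ := Function.Periodic.exists_mem_Ico₀ (f := W t) (c := 2 * π)
    (R.per_W t) (by positivity) θ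
  rw [hyW]
  have h1 := hWm t ht y ⟨hy.1, hy.2.le⟩
  have h2 := hM t ht
  linarith

end Reduced
/-! ### Reduction of a Gowdy solution -/

namespace GowdySolution

variable {Q lam Tm Tp : ℝ} (G : GowdySolution Q lam Tm Tp)

/-- `W = log (α Q² e^{2λφ + 2(η - U)})`, the logarithm of the potential term of the energy. -/
def logV (t θ : ℝ) : ℝ :=
  Real.log (G.α t θ) + Real.log (Q ^ 2) + 2 * lam * G.φ t θ + 2 * (G.η t θ - G.U t θ)

lemma exp_logV (hQ : Q ≠ 0) {t : ℝ} (ht : t ∈ Ioo Tm Tp) (θ : ℝ) :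
    exp (G.logV t θ)
      = G.α t θ * Q ^ 2 * exp (2 * lam * G.φ t θ + 2 * (G.η t θ - G.U t θ)) := by
  rw [logV, add_assoc, exp_add, exp_add, exp_log (G.sys.alpha_pos t ht θ), exp_log (by positivity)]

lemma smooth_log_α : SmoothSlab Tm Tp (fun t θ => Real.log (G.α t θ)) :=
  SmoothSlab.log (G.smooth _ (by simp)) fun t ht θ => (G.sys.alpha_pos t ht θ).ne'

lemma pt_log_α (hQ : Q ≠ 0) {t : ℝ} (ht : t ∈ Ioo Tm Tp) (θ : ℝ) :
    pt (fun t θ => Real.log (G.α t θ)) t θ = -(t * exp (G.logV t θ)) := by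
  have hα : SmoothSlab Tm Tp G.α := G.smooth _ (by simp)
  have hpos := G.sys.alpha_pos t ht θ
  refine ((hα.hasDerivAt_t ht θ).log hpos.ne').deriv.trans ?_
  rw [G.sys.constraint_α t ht, G.exp_logV hQ ht]
  field_simp

/-- With `a = α^{-1/2}` and `c = α^{1/2}` written as exponentials of `± (log α) / 2`, so that
positivity and `a c = 1` hold for all `t`: a solution satisfying the timelike
convergence condition solves the reduced system. -/
lemma reduced (hQ : Q ≠ 0) (hTm : 0 < Tm) (htcc : TCC Q lam Tm Tp G.η G.α G.U G.φ G.σ) :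
    Reduced lam Tm Tp (fun t θ => exp (-(1 / 2) * Real.log (G.α t θ)))
      (fun t θ => exp (1 / 2 * Real.log (G.α t θ))) G.logV G.U G.A G.φ G.σ := by
  have hη : SmoothSlab Tm Tp G.η := G.smooth _ (by simp)
  have hα : SmoothSlab Tm Tp G.α := G.smooth _ (by simp)
  have hU : SmoothSlab Tm Tp G.U := G.smooth _ (by simp)
  have hA : SmoothSlab Tm Tp G.A := G.smooth _ (by simp)
  have hφ : SmoothSlab Tm Tp G.φ := G.smooth _ (by simp)
  have hσ : SmoothSlab Tm Tp G.σ := G.smooth _ (by simp)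
  have pη := G.periodic G.η (by simp)
  have pα := G.periodic G.α (by simp)
  have pU := G.periodic G.U (by simp)
  have pφ := G.periodic G.φ (by simp)
  have hb := G.smooth_log_α
  have hW : SmoothSlab Tm Tp G.logV :=
    ((hb.add (SmoothSlab.const _)).add ((SmoothSlab.const (2 * lam)).mul hφ)).add
      ((SmoothSlab.const 2).mul (hη.sub hU))
  have hbt := fun t ht θ => G.pt_log_α hQ (t := t) ht θ
  have hac : ∀ t θ, exp (-(1 / 2) * Real.log (G.α t θ)) * exp (1 / 2 * Real.log (G.α t θ)) = 1 := by
    intro t θ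
    rw [← exp_add, ← exp_zero]
    ring_nf
  have hcc : ∀ t ∈ Ioo Tm Tp, ∀ θ, G.α t θ = exp (1 / 2 * Real.log (G.α t θ)) ^ 2 := by
    intro t ht θ
    rw [← exp_nat_mul]
    push_cast
    rw [← mul_assoc]
    norm_num
    rw [exp_log (G.sys.alpha_pos t ht θ)]
  have hbθ : ∀ t ∈ Ioo Tm Tp, ∀ θ,
      pth (fun t θ => Real.log (G.α t θ)) t θ = pth G.α t θ / G.α t θ := fun t ht θ =>
    ((hα.hasDerivAt_θ ht θ).log (G.sys.alpha_pos t ht θ).ne').deriv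
  have hcθ : ∀ t ∈ Ioo Tm Tp, ∀ θ, pth (fun t θ => exp (1 / 2 * Real.log (G.α t θ))) t θ
      = exp (-(1 / 2) * Real.log (G.α t θ)) * pth G.α t θ / 2 := by
    intro t ht θ
    refine (((hb.hasDerivAt_θ ht θ).const_mul (1 / 2)).exp).deriv.trans ?_
    have hpos := G.sys.alpha_pos t ht θ
    rw [hbθ t ht θ]
    have h1 := hac t θ
    have h2 := hcc t ht θ
    have h3 : exp (1 / 2 * Real.log (G.α t θ))
        = exp (-(1 / 2) * Real.log (G.α t θ)) * G.α t θ := by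
      linear_combination -exp (1 / 2 * Real.log (G.α t θ)) * h1
        - exp (-(1 / 2) * Real.log (G.α t θ)) * h2
    rw [h3]
    field_simp
  -- every wave equation is multiplied by `a`; the `α`-terms become the `c`-terms
  have wave : ∀ t ∈ Ioo Tm Tp, ∀ θ, ∀ x y p q r : ℝ,
      x - G.α t θ * y = pt G.α t θ * p / (2 * G.α t θ) + pth G.α t θ * q / 2 + r →
      exp (-(1 / 2) * Real.log (G.α t θ)) * x = exp (1 / 2 * Real.log (G.α t θ)) * y
        + pth (fun t θ => exp (1 / 2 * Real.log (G.α t θ))) t θ * q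
        + exp (-(1 / 2) * Real.log (G.α t θ)) * (-(t * exp (G.logV t θ) / 2 * p) + r) := by
    intro t ht θ x y p q r h
    have hpos := G.sys.alpha_pos t ht θ
    have h1 := hac t θ
    have h2 := hcc t ht θ
    have h4 : pt G.α t θ * p / (2 * G.α t θ) = -(t * exp (G.logV t θ) / 2 * p) := by
      rw [G.sys.constraint_α t ht, G.exp_logV hQ ht]
      field_simp
    rw [hcθ t ht θ]
    rw [h4] at h
    linear_combination exp (-(1 / 2) * Real.log (G.α t θ)) * h
      + y * exp (1 / 2 * Real.log (G.α t θ)) * h1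
      + y * exp (-(1 / 2) * Real.log (G.α t θ)) * h2
  have hα' : ∀ t ∈ Ioo Tm Tp, ∀ θ, exp (-(1 / 2) * Real.log (G.α t θ)) * G.α t θ
      = exp (1 / 2 * Real.log (G.α t θ)) := by
    intro t ht θ
    linear_combination exp (1 / 2 * Real.log (G.α t θ)) * hac t θ
        + exp (-(1 / 2) * Real.log (G.α t θ)) * hcc t ht θ
  refine
    { smooth_a := ((SmoothSlab.const _).mul hb).exp
      smooth_c := ((SmoothSlab.const _).mul hb).exp
      smooth_W := hW
      smooth_U := hU
      smooth_A := hA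
      smooth_φ := hφ
      smooth_σ := hσ
      per_c := fun t θ => by simp only [pα]
      per_W := fun t θ => by simp only [logV, pα, pφ, pη, pU]
      per_U := pU
      per_A := G.periodic _ (by simp)
      per_φ := pφ
      per_σ := G.periodic _ (by simp)
      a_pos := fun t θ => exp_pos _
      c_pos := fun t θ => exp_pos _
      a_mul_c := hac
      pt_a := fun t ht θ => ?_
      pt_c := fun t ht θ => ?_
      pt_W := fun t ht θ => ?_
      pth_W := fun t ht θ => ?_
      wave_U := fun t ht θ => ?_
      wave_A := fun t ht θ => ?_
      wave_φ := fun t ht θ => ?_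
      wave_σ := fun t ht θ => ?_
      tcc := fun t ht θ => ?_ }
  · refine (((hb.hasDerivAt_t ht θ).const_mul (-(1 / 2))).exp).deriv.trans ?_
    rw [hbt t ht θ]
    ring
  · refine (((hb.hasDerivAt_t ht θ).const_mul (1 / 2)).exp).deriv.trans ?_
    rw [hbt t ht θ]
    ring
  · have h0 : 0 < t := hTm.trans ht.1
    refine ((((hb.hasDerivAt_t ht θ).add_const _).add
      ((hφ.hasDerivAt_t ht θ).const_mul (2 * lam))).add
      (((hη.hasDerivAt_t ht θ).sub (hU.hasDerivAt_t ht θ)).const_mul 2)).deriv.trans ?_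
    have h := (div_eq_iff h0.ne').1 (G.sys.constraint_t t ht θ)
    rw [← G.exp_logV hQ ht] at h
    rw [hbt t ht θ, h, ← hcc t ht θ]
    simp only [kinD, gradD, coefA, coefσ]
    ring
  · have h0 : 0 < t := hTm.trans ht.1
    have hpos := G.sys.alpha_pos t ht θ
    refine ((((hb.hasDerivAt_θ ht θ).add_const _).add
      ((hφ.hasDerivAt_θ ht θ).const_mul (2 * lam))).add
      (((hη.hasDerivAt_θ ht θ).sub (hU.hasDerivAt_θ ht θ)).const_mul 2)).deriv.trans ?_
    have h := (div_eq_iff h0.ne').1 (G.sys.constraint_θ t ht θ)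
    rw [hbθ t ht θ, h]
    simp only [momD, coefA, coefσ]
    field_simp
    ring
  · rw [wave t ht θ _ (pth (pth G.U) t θ) (pt G.U t θ) (pth G.U t θ)
      (-(pt G.U t θ / t) + 2 * coefA G.U t θ * (pt G.A t θ ^ 2 - G.α t θ * pth G.A t θ ^ 2)
        + exp (G.logV t θ) / 4) ?_]
    · linear_combination (-2 * coefA G.U t θ * pth G.A t θ ^ 2) * hα' t ht θ
    · rw [G.sys.evol_U t ht θ, G.exp_logV hQ ht, coefA]
      ring
  · rw [wave t ht θ _ (pth (pth G.A) t θ) (pt G.A t θ) (pth G.A t θ)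
      (pt G.A t θ / t - 4 * (pt G.A t θ * pt G.U t θ - G.α t θ * pth G.A t θ * pth G.U t θ)) ?_]
    · linear_combination (4 * pth G.A t θ * pth G.U t θ) * hα' t ht θ
    · rw [G.sys.evol_A t ht θ]
      ring
  · rw [wave t ht θ _ (pth (pth G.φ) t θ) (pt G.φ t θ) (pth G.φ t θ)
      (-(pt G.φ t θ / t)
        + 4 * lam * coefσ lam G.φ t θ * (pt G.σ t θ ^ 2 - G.α t θ * pth G.σ t θ ^ 2)
        - lam * exp (G.logV t θ)) ?_]
    · linear_combination (-4 * lam * coefσ lam G.φ t θ * pth G.σ t θ ^ 2) * hα' t ht θ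
    · rw [G.sys.evol_φ t ht θ, G.exp_logV hQ ht, coefσ]
      ring
  · rw [wave t ht θ _ (pth (pth G.σ) t θ) (pt G.σ t θ) (pth G.σ t θ)
      (-(pt G.σ t θ / t)
        - 2 * lam * (pt G.φ t θ * pt G.σ t θ - G.α t θ * pth G.φ t θ * pth G.σ t θ)) ?_]
    · linear_combination (2 * lam * pth G.φ t θ * pth G.σ t θ) * hα' t ht θ
    · rw [G.sys.evol_σ t ht θ]
      ring
  · have h := htcc t ht θ
    have e : 2 * (G.η t θ + lam * G.φ t θ - G.U t θ)
        = 2 * lam * G.φ t θ + 2 * (G.η t θ - G.U t θ) := by ring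
    rw [e] at h
    rw [G.exp_logV hQ ht, coefσ]
    linarith

end GowdySolution

/-! ### Conclusion -/

theorem alpha_bounded_past (Q lam Tm Tp t_i : ℝ) (hQ : Q ≠ 0) (hTm : 0 < Tm) (hti : Tm < t_i)
    (hTp : t_i < Tp) (G : GowdySolution Q lam Tm Tp)
    (lamBar : ℝ) (hlam : |lam| ≤ lamBar) (hlamBar : lamBar < 1 / 2)
    (htcc : TCC Q lam Tm Tp G.η G.α G.U G.φ G.σ) :
    ∃ C : ℝ, ∀ t ∈ Ioc Tm t_i, ∀ θ : ℝ,
      |Real.log (G.α t θ)| ≤ C ∧ |G.α t θ| ≤ C := by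
  obtain ⟨M, hM⟩ := (G.reduced hQ hTm htcc).W_bounded hTm hti hTp
  have hmem : ∀ s ∈ Ioc Tm t_i, s ∈ Ioo Tm Tp := fun s hs => ⟨hs.1, hs.2.trans_lt hTp⟩
  have hti0 : 0 < t_i := hTm.trans hti
  have hb := G.smooth_log_α
  have hi : t_i ∈ Ioo Tm Tp := ⟨hti, hTp⟩
  -- at the fixed time `t_i`, compactness of the circle bounds `log α`
  obtain ⟨B, hB⟩ := (isCompact_Icc (a := (0 : ℝ)) (b := 2 * π)).exists_bound_of_continuousOn
    (hb.continuous_θ hi).continuousOn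
  have hBall : ∀ θ, |Real.log (G.α t_i θ)| ≤ B := by
    intro θ
    obtain ⟨y, hy, hyα⟩ := Function.Periodic.exists_mem_Ico₀ (f := G.α t_i) (c := 2 * π)
      (G.periodic G.α (by simp) t_i) (by positivity) θ
    rw [hyα]
    exact hB y ⟨hy.1, hy.2.le⟩
  set K := t_i * exp M with hK
  have hK0 : 0 < K := by positivity
  set C := B + K * (t_i - Tm) with hC
  have hlog : ∀ t ∈ Ioc Tm t_i, ∀ θ, |Real.log (G.α t θ)| ≤ C := by
    intro t ht θ
    have hd : ∀ s ∈ Ioc Tm t_i, HasDerivAt (fun s => Real.log (G.α s θ))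
        (-(s * exp (G.logV s θ))) s := fun s hs => by
      rw [← G.pt_log_α hQ (hmem s hs)]
      exact hb.hasDerivAt_t (hmem s hs) θ
    have h1 := mono_of_deriv (fun s hs => (hd s hs).neg) (fun s hs => by
      have : 0 < s := hTm.trans hs.1
      rw [neg_neg]
      positivity) ht
    have h2 := mono_of_deriv (fun s hs => (hd s hs).add ((hasDerivAt_id s).const_mul K))
      (fun s hs => by
        have h3 : s * exp (G.logV s θ) ≤ K :=
          mul_le_mul hs.2 (exp_le_exp.2 (hM s hs θ)) (exp_pos _).le hti0.le
        linarith) ht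
    simp only [Pi.neg_apply, Pi.add_apply, id] at h1 h2
    have h4 := abs_le.1 (hBall θ)
    have h5 : K * Tm ≤ K * t := mul_le_mul_of_nonneg_left ht.1.le hK0.le
    have h6 : 0 ≤ K * (t_i - Tm) := mul_nonneg hK0.le (sub_nonneg.2 hti.le)
    rw [abs_le]
    constructor <;> linarith
  refine ⟨max C (exp C), fun t ht θ => ⟨(hlog t ht θ).trans (le_max_left _ _), ?_⟩⟩
  have hpos := G.sys.alpha_pos t (hmem t ht) θ
  rw [abs_of_pos hpos, ← exp_log hpos]
  exact (exp_le_exp.2 (abs_le.1 (hlog t ht θ)).2).trans (le_max_right _ _)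

end
end
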